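/- Generalized Neumann integral: for every integer n ≥ 0, every ν ∈ ℂ∖ℤ with Re(ν − n) > −1, and every x with −1 < x < 1, the Cauchy principal value P∫_{−1}^1 (1+ξ)^{ν−n} P_ν(ξ) / (2(x−ξ)) dξ equals (1+x)^{ν−n} Q_ν(x). -/

import Mathlib

open Real MeasureTheory intervalIntegral Filter Topology

/-- Legendre function of the first kind of complex degree `ν`, defined on `(-1, 1]`
via the Mehler–Dirichlet integral. -/
noncomputable def legendreP (ν : ℂ) (x : ℝ) : ℂ :=
  if x = 1 then 1
  else ((2 / π : ℝ) : ℂ) *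
    ∫ β in (0:ℝ)..(Real.arccos x),
      Complex.cos ((2*ν + 1) * (β:ℂ) / 2) / ((Real.sqrt (2 * (Real.cos β - x)) : ℝ) : ℂ)

/-- Legendre function of the second kind of non-integer complex degree `ν` on `(-1,1)`. -/
noncomputable def legendreQ (ν : ℂ) (x : ℝ) : ℂ :=
  ((π:ℝ) : ℂ) / (2 * Complex.sin (ν * (π:ℂ))) *
    (Complex.cos (ν * (π:ℂ)) * legendreP ν x - legendreP ν (-x))

lemma ii_abs_rpow (c a b r : ℝ) (hr : -1 < r) :
    IntervalIntegrable (fun t : ℝ => |t - c| ^ r) volume a b := by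
  have h1 : IntervalIntegrable (fun t : ℝ => (t - c) ^ r) volume a b := by
    have := (intervalIntegral.intervalIntegrable_rpow' hr (a := a - c) (b := b - c)).comp_sub_right c
    simpa using this
  have h2 : IntervalIntegrable (fun t : ℝ => (c - t) ^ r) volume a b := by
    have := (intervalIntegral.intervalIntegrable_rpow' hr (a := c - a) (b := c - b)).comp_sub_left c
    simpa using this
  refine (h1.norm.add h2.norm).mono_fun ?_ ?_
  · exact (by fun_prop : Measurable (fun t : ℝ => |t - c| ^ r)).aestronglyMeasurable
  · refine Eventually.of_forall fun t => ?_
    simp only [Pi.add_apply]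
    rw [Real.norm_of_nonneg (by positivity), Real.norm_of_nonneg (by positivity)]
    rcases le_total c t with h | h
    · rw [abs_of_nonneg (sub_nonneg.mpr h), Real.norm_of_nonneg (Real.rpow_nonneg (sub_nonneg.mpr h) _)]
      linarith [norm_nonneg ((c - t) ^ r)]
    · rw [abs_of_nonpos (sub_nonpos.mpr h), neg_sub, Real.norm_of_nonneg (Real.rpow_nonneg (sub_nonneg.mpr h) ((r)))]
      linarith [norm_nonneg ((t - c) ^ r)]

lemma io_abs_rpow (c a b r : ℝ) (hr : -1 < r) :
    IntegrableOn (fun t : ℝ => |t - c| ^ r) (Set.Ioo a b) := by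
  rcases le_total a b with h | h
  · exact ((intervalIntegrable_iff_integrableOn_Ioo_of_le h).mp (ii_abs_rpow c a b r hr))
  · rw [Set.Ioo_eq_empty (not_lt.mpr h)]; exact integrableOn_empty

lemma abs_cos_sub_ge (θ : ℝ) (hθ : θ ∈ Set.Ioo 0 π) :
    ∃ m > 0, ∀ a ∈ Set.Icc 0 π, m * |a - θ| ≤ |Real.cos a - Real.cos θ| := by
  have hpi := Real.pi_pos
  have hs : 0 < Real.sin (θ / 2) := Real.sin_pos_of_pos_of_lt_pi (by linarith [hθ.1]) (by linarith [hθ.2])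
  have hc : 0 < Real.cos (θ / 2) := Real.cos_pos_of_mem_Ioo ⟨by linarith [hθ.1], by linarith [hθ.2]⟩
  set m := min (Real.sin (θ / 2)) (Real.cos (θ / 2)) with hm
  have hm0 : 0 < m := lt_min hs hc
  refine ⟨m * (2 / π), by positivity, fun a ha => ?_⟩
  have hsa : 0 ≤ Real.sin (a / 2) := Real.sin_nonneg_of_nonneg_of_le_pi (by linarith [ha.1]) (by linarith [ha.2])
  have hca : 0 ≤ Real.cos (a / 2) := Real.cos_nonneg_of_mem_Icc ⟨by linarith [ha.1], by linarith [ha.2]⟩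
  have h1 : m ≤ Real.sin ((a + θ) / 2) := by
    have e : (a + θ) / 2 = a / 2 + θ / 2 := by ring
    rw [e, Real.sin_add]
    have h2 := Real.sin_sq_add_cos_sq (a / 2)
    have h3 := Real.sin_le_one (a / 2)
    have h4 := Real.cos_le_one (a / 2)
    have h5 : 1 ≤ Real.sin (a / 2) + Real.cos (a / 2) := by nlinarith
    have h6 := min_le_left (Real.sin (θ / 2)) (Real.cos (θ / 2))
    have h7 := min_le_right (Real.sin (θ / 2)) (Real.cos (θ / 2))
    nlinarith [mul_nonneg hsa (sub_nonneg.mpr h7), mul_nonneg hca (sub_nonneg.mpr h6)]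
  have h2 := Real.mul_abs_le_abs_sin (x := (a - θ) / 2) (by
    rw [abs_le]; constructor <;> linarith [ha.1, ha.2, hθ.1, hθ.2])
  rw [Real.cos_sub_cos, abs_mul, abs_mul, abs_neg, abs_two]
  have h3 : |(a - θ) / 2| = |a - θ| / 2 := by rw [abs_div, abs_two]
  rw [h3] at h2
  have h4 : m ≤ |Real.sin ((a + θ) / 2)| := h1.trans (le_abs_self _)
  have h5 := abs_nonneg (Real.sin ((a - θ) / 2))
  have h6 : 0 ≤ 2 / π * (|a - θ| / 2) := by positivity
  calc m * (2 / π) * |a - θ| = 2 * m * (2 / π * (|a - θ| / 2)) := by ring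
    _ ≤ 2 * |Real.sin ((a + θ) / 2)| * |Real.sin ((a - θ) / 2)| := by
      apply mul_le_mul _ h2 h6 (by positivity)
      linarith

lemma io_abs_cos_sub (θ : ℝ) (hθ : θ ∈ Set.Ioo 0 π) :
    IntegrableOn (fun a : ℝ => (2 * |Real.cos a - Real.cos θ|) ^ (-1 / 2 : ℝ)) (Set.Ioo 0 π) := by
  obtain ⟨m, hm, h⟩ := abs_cos_sub_ge θ hθ
  refine Integrable.mono' ((io_abs_rpow θ 0 π (-1/2) (by norm_num)).const_mul ((2 * m) ^ (-1 / 2 : ℝ))) ?_ ?_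
  · exact (by fun_prop : Measurable (fun a : ℝ => (2 * |Real.cos a - Real.cos θ|) ^ (-1 / 2 : ℝ))).aestronglyMeasurable
  · have : ∀ᵐ a ∂(volume.restrict (Set.Ioo (0:ℝ) π)), a ≠ θ :=
        ae_restrict_of_ae (Measure.ae_ne volume θ)
    filter_upwards [this, ae_restrict_mem measurableSet_Ioo] with a ha ha2
    rw [Real.norm_of_nonneg (by positivity), ← Real.mul_rpow (by positivity) (abs_nonneg _)]
    have hp : 0 < |a - θ| := abs_pos.mpr (sub_ne_zero.mpr ha)
    refine Real.rpow_le_rpow_of_nonpos (by positivity) ?_ (by norm_num)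
    have := h a ⟨ha2.1.le, ha2.2.le⟩
    linarith

lemma tendsto_int_Ioi (h : ℝ → ℂ) (hh : IntegrableOn h (Set.Ioi 0)) :
    Tendsto (fun N : ℝ => ∫ y in (1 / N)..N, h y) atTop (𝓝 (∫ y in Set.Ioi 0, h y)) := by
  have : Tendsto (fun N : ℝ => ∫ y in Set.Ioi (0:ℝ), (Set.Ioc (1 / N) N).indicator h y) atTop
      (𝓝 (∫ y in Set.Ioi 0, h y)) := by
    refine tendsto_integral_filter_of_dominated_convergence (fun y => ‖h y‖) ?_ ?_ hh.norm ?_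
    · exact Eventually.of_forall fun N => hh.aestronglyMeasurable.indicator measurableSet_Ioc
    · exact Eventually.of_forall fun N => Eventually.of_forall fun y => norm_indicator_le_norm_self _ _
    · filter_upwards [ae_restrict_mem measurableSet_Ioi] with y hy
      refine tendsto_const_nhds.congr' ?_
      have hy' : (0:ℝ) < y := hy
      filter_upwards [eventually_ge_atTop y, eventually_gt_atTop (1 / y), eventually_gt_atTop 0] with N h1 h2 h3
      rw [Set.indicator_of_mem]
      refine ⟨?_, h1⟩
      rw [div_lt_iff₀ h3]; rw [div_lt_iff₀ hy'] at h2; linarith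
  refine this.congr' ?_
  filter_upwards [eventually_ge_atTop 1] with N hN
  have h0 : (0:ℝ) < N := by linarith
  have h1 : 1 / N ≤ N := by rw [div_le_iff₀ h0]; nlinarith
  rw [setIntegral_indicator measurableSet_Ioc, Set.inter_eq_self_of_subset_right, intervalIntegral.integral_of_le h1]
  intro y hy
  have : 0 < 1 / N := by positivity
  exact this.trans hy.1

lemma legendreP_phi (ν : ℂ) (x : ℝ) (hx : x ∈ Set.Ioo (-1:ℝ) 1) :
    legendreP ν x = ((2 / π : ℝ) : ℂ) * ∫ φ in Set.Ioo 0 (π / 2),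
      Complex.cos ((2 * ν + 1) * (Real.arcsin (√((1 - x) / 2) * Real.sin φ) : ℂ)) /
        ((√(1 - (√((1 - x) / 2) * Real.sin φ) ^ 2) : ℝ) : ℂ) := by
  have hx1 : x ≠ 1 := hx.2.ne
  rw [legendreP, if_neg hx1]
  congr 1
  set k := √((1 - x) / 2) with hk
  have hk0 : 0 < k := Real.sqrt_pos.mpr (by linarith [hx.2])
  have hk2 : k ^ 2 = (1 - x) / 2 := Real.sq_sqrt (by linarith [hx.2])
  have hk1 : k < 1 := by nlinarith [hx.1]
  have hth : Real.arccos x = 2 * Real.arcsin k := by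
    have h1 : Real.cos (2 * Real.arcsin k) = x := by
      rw [Real.cos_two_mul, Real.cos_sq', Real.sin_arcsin (by linarith) hk1.le, hk2]; ring
    rw [← h1, Real.arccos_cos]
    · have := Real.arcsin_nonneg.mpr hk0.le; linarith
    · have := Real.arcsin_le_pi_div_two k; linarith
  have hpi := Real.pi_pos
  have hsin : ∀ φ ∈ Set.Icc 0 (π / 2), k * Real.sin φ ∈ Set.Icc 0 k := by
    intro φ hφ
    have h1 := Real.sin_nonneg_of_nonneg_of_le_pi hφ.1 (by linarith [hφ.2])
    have h2 := Real.sin_le_one φ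
    exact ⟨by positivity, by nlinarith⟩
  have hmono : StrictMonoOn (fun φ => 2 * Real.arcsin (k * Real.sin φ)) (Set.Icc 0 (π / 2)) := by
    intro a ha b hb hab
    have h1 : Real.sin a < Real.sin b := Real.strictMonoOn_sin ⟨by linarith [ha.1], ha.2⟩ ⟨by linarith [hb.1], hb.2⟩ hab
    have h2 : k * Real.sin a < k * Real.sin b := mul_lt_mul_of_pos_left h1 hk0
    have := Real.strictMonoOn_arcsin ⟨by linarith [(hsin a ha).1], by linarith [(hsin a ha).2]⟩
      ⟨by linarith [(hsin b hb).1], by linarith [(hsin b hb).2]⟩ h2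
    simp only []
    linarith
  have hcont : ContinuousOn (fun φ => 2 * Real.arcsin (k * Real.sin φ)) (Set.Icc 0 (π / 2)) := by
    fun_prop
  have himg := hcont.image_Ioo_of_strictMonoOn (by linarith) hmono
  simp only [Real.sin_zero, mul_zero, Real.arcsin_zero, Real.sin_pi_div_two, mul_one, ← hth] at himg
  rw [intervalIntegral.integral_of_le (Real.arccos_nonneg x), integral_Ioc_eq_integral_Ioo, ← himg]
  rw [integral_image_eq_integral_abs_deriv_smul (f' := fun φ => 2 * (1 / √(1 - (k * Real.sin φ) ^ 2) * (k * Real.cos φ)))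
    measurableSet_Ioo ?_ (hmono.injOn.mono Set.Ioo_subset_Icc_self)]
  · refine setIntegral_congr_fun measurableSet_Ioo ?_
    intro φ hφ
    have hs := hsin φ ⟨hφ.1.le, hφ.2.le⟩
    have hc : 0 < Real.cos φ := Real.cos_pos_of_mem_Ioo ⟨by linarith [hφ.1], hφ.2⟩
    have hq : 0 < √(1 - (k * Real.sin φ) ^ 2) := Real.sqrt_pos.mpr (by nlinarith [hs.1, hs.2])
    have h1 : √(2 * (Real.cos (2 * Real.arcsin (k * Real.sin φ)) - x)) = 2 * (k * Real.cos φ) := by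
      have : 2 * (Real.cos (2 * Real.arcsin (k * Real.sin φ)) - x) = (2 * (k * Real.cos φ)) ^ 2 := by
        rw [Real.cos_two_mul, Real.cos_sq', Real.sin_arcsin (by linarith [hs.1]) (by linarith [hs.2])]
        have := Real.sin_sq_add_cos_sq φ
        have hx' : x = 1 - 2 * k ^ 2 := by linarith
        rw [hx']
        linear_combination (-4 * k^2) * this
      rw [this, Real.sqrt_sq (by positivity)]
    simp only []
    rw [h1, abs_of_pos (by positivity), Complex.real_smul]
    have : (2 * ν + 1) * ((2 * Real.arcsin (k * Real.sin φ) : ℝ) : ℂ) / 2 = (2 * ν + 1) * (Real.arcsin (k * Real.sin φ) : ℂ) := by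
      push_cast; ring
    rw [this]
    have hq' : ((√(1 - (k * Real.sin φ) ^ 2) : ℝ) : ℂ) ≠ 0 := by exact_mod_cast hq.ne'
    have hc' : ((k * Real.cos φ : ℝ) : ℂ) ≠ 0 := by
      have : 0 < k * Real.cos φ := by positivity
      exact_mod_cast this.ne'
    generalize (√(1 - (k * Real.sin φ) ^ 2) : ℝ) = Q at *
    generalize (k * Real.cos φ) = R at *
    push_cast
    field_simp
  · intro φ hφ
    have hs := hsin φ ⟨hφ.1.le, hφ.2.le⟩
    have h1 := (Real.hasDerivAt_arcsin (x := k * Real.sin φ) (by linarith [hs.1]) (by linarith [hs.2]))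
    have h2 := ((Real.hasDerivAt_sin φ).const_mul k)
    exact ((h1.comp φ h2).const_mul 2).hasDerivWithinAt

lemma legendreP_lipschitz (ν : ℂ) (x : ℝ) (hx : x ∈ Set.Ioo (-1:ℝ) 1) :
    ∃ C r : ℝ, 0 < r ∧ ∀ ξ, |ξ - x| < r → ‖legendreP ν ξ - legendreP ν x‖ ≤ C * |ξ - x| := by
  set g : ℝ → ℂ := fun y => Complex.cos ((2 * ν + 1) * (Real.arcsin y : ℂ)) / ((√(1 - y ^ 2) : ℝ) : ℂ) with hg
  set κ := √((3 - x) / 4) with hκ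
  have hκ0 : 0 ≤ κ := Real.sqrt_nonneg _
  have hκ2 : κ ^ 2 = (3 - x) / 4 := Real.sq_sqrt (by linarith [hx.2])
  have hκ1 : κ < 1 := by nlinarith [hx.1]
  have hgd : ContDiffOn ℝ 1 g (Set.Icc 0 κ) := by
    intro y hy
    refine ContDiffAt.contDiffWithinAt ?_
    have hy2 : 0 < 1 - y ^ 2 := by nlinarith [hy.1, hy.2]
    have h1 : ContDiffAt ℝ 1 (fun y : ℝ => ((Real.arcsin y : ℝ) : ℂ)) y :=
      Complex.ofRealCLM.contDiff.contDiffAt.comp y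
        (Real.contDiffAt_arcsin (by linarith [hy.1]) (by linarith [hy.2]))
    have h2 : ContDiffAt ℝ 1 (fun y : ℝ => ((√(1 - y ^ 2) : ℝ) : ℂ)) y := by
      refine Complex.ofRealCLM.contDiff.contDiffAt.comp y (ContDiffAt.sqrt (by fun_prop) hy2.ne')
    have h3 : ContDiff ℝ 1 Complex.cos := Complex.contDiff_cos.restrict_scalars ℝ
    simp only [hg, div_eq_mul_inv]
    refine ContDiffAt.mul ?_ (h2.inv ?_)
    · exact h3.contDiffAt.comp y (contDiffAt_const.mul h1)
    · exact_mod_cast (Real.sqrt_pos.mpr hy2).ne'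
  obtain ⟨L, hL⟩ := hgd.exists_lipschitzOnWith one_ne_zero (convex_Icc 0 κ) isCompact_Icc
  have hkx : 0 < √((1 - x) / 2) := Real.sqrt_pos.mpr (by linarith [hx.2])
  have hpi := Real.pi_pos
  refine ⟨‖((2 / π : ℝ) : ℂ)‖ * (L * (1 / (2 * √((1 - x) / 2))) * (π / 2)),
    min ((1 + x) / 2) (1 - x), lt_min (by linarith [hx.1]) (by linarith [hx.2]), ?_⟩
  intro ξ hξ
  have hξ1 := abs_lt.mp (hξ.trans_le (min_le_left _ _))
  have hξ2 := abs_lt.mp (hξ.trans_le (min_le_right _ _))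
  have hξm : ξ ∈ Set.Ioo (-1:ℝ) 1 := ⟨by linarith [hξ1.1, hx.1], by linarith [hξ2.2]⟩
  have hkk : ∀ t, t ≤ x + (1 + x) / 2 → x - (1 + x) / 2 ≤ t → ∀ φ ∈ Set.Icc 0 (π / 2), √((1 - t) / 2) * Real.sin φ ∈ Set.Icc 0 κ := by
    intro t _ ht φ hφ
    have h1 := Real.sin_nonneg_of_nonneg_of_le_pi hφ.1 (by linarith [hφ.2])
    have h2 := Real.sin_le_one φ
    have h3 : √((1 - t) / 2) ≤ κ := Real.sqrt_le_sqrt (by linarith)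
    have h4 := Real.sqrt_nonneg ((1 - t) / 2)
    exact ⟨by positivity, by nlinarith⟩
  have h_int : ∀ t, t ≤ x + (1 + x) / 2 → x - (1 + x) / 2 ≤ t → IntegrableOn (fun φ => g (√((1 - t) / 2) * Real.sin φ)) (Set.Ioo 0 (π / 2)) := by
    intro t ht1 ht2
    have : ContinuousOn (fun φ => g (√((1 - t) / 2) * Real.sin φ)) (Set.Icc 0 (π / 2)) :=
      hgd.continuousOn.comp (by fun_prop) (hkk t ht1 ht2)
    exact this.integrableOn_Icc.mono_set Set.Ioo_subset_Icc_self
  have hxx : x ≤ x + (1 + x) / 2 ∧ x - (1 + x) / 2 ≤ x := ⟨by linarith [hx.1], by linarith [hx.1]⟩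
  have hξξ : ξ ≤ x + (1 + x) / 2 ∧ x - (1 + x) / 2 ≤ ξ := ⟨by linarith, by linarith⟩
  rw [legendreP_phi ν ξ hξm, legendreP_phi ν x hx, ← mul_sub, norm_mul, mul_assoc]
  refine mul_le_mul_of_nonneg_left ?_ (norm_nonneg _)
  have := integral_sub (h_int ξ hξξ.1 hξξ.2) (h_int x hxx.1 hxx.2)
  simp only [hg] at this
  rw [← this]
  have hbound := norm_setIntegral_le_of_norm_le_const (μ := volume) (s := Set.Ioo 0 (π / 2))
    (f := fun φ => g (√((1 - ξ) / 2) * Real.sin φ) - g (√((1 - x) / 2) * Real.sin φ))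
    (C := L * (1 / (2 * √((1 - x) / 2)) * |ξ - x|)) (by simp) ?_
  · refine hbound.trans (le_of_eq ?_)
    simp only [measureReal_def, Real.volume_Ioo, sub_zero]
    rw [ENNReal.toReal_ofReal (by positivity)]
    ring
  · intro φ hφ
    have hφ' : φ ∈ Set.Icc 0 (π / 2) := ⟨hφ.1.le, hφ.2.le⟩
    have h1 := hL.norm_sub_le (hkk ξ hξξ.1 hξξ.2 φ hφ') (hkk x hxx.1 hxx.2 φ hφ')
    refine h1.trans (mul_le_mul_of_nonneg_left ?_ L.2)
    rw [← sub_mul, norm_mul, Real.norm_eq_abs, Real.norm_eq_abs]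
    have h2 : |√((1 - ξ) / 2) - √((1 - x) / 2)| ≤ 1 / (2 * √((1 - x) / 2)) * |ξ - x| := by
      have ha := Real.sqrt_nonneg ((1 - ξ) / 2)
      have e : (√((1 - ξ) / 2) - √((1 - x) / 2)) * (√((1 - ξ) / 2) + √((1 - x) / 2)) = -(ξ - x) / 2 := by
        have e1 := Real.sq_sqrt (show 0 ≤ (1 - ξ) / 2 by linarith [hξm.2])
        have e2 := Real.sq_sqrt (show 0 ≤ (1 - x) / 2 by linarith [hx.2])
        linear_combination e1 - e2
      have e' := congrArg abs e
      rw [abs_mul, abs_of_pos (by linarith : 0 < √((1 - ξ) / 2) + √((1 - x) / 2)), abs_div, abs_neg, abs_two] at e'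
      rw [one_div_mul_eq_div, le_div_iff₀ (by positivity)]
      have := abs_nonneg (√((1 - ξ) / 2) - √((1 - x) / 2))
      nlinarith
    have h3 : |Real.sin φ| ≤ 1 := Real.abs_sin_le_one φ
    calc _ ≤ |√((1 - ξ) / 2) - √((1 - x) / 2)| * 1 := mul_le_mul_of_nonneg_left h3 (abs_nonneg _)
      _ ≤ _ := by rw [mul_one]; exact h2

lemma pv_aux (f : ℝ → ℂ) (hf : IntegrableOn f (Set.Ioo (-1) 1)) (x : ℝ)
    (hx : x ∈ Set.Ioo (-1:ℝ) 1) (C r : ℝ) (hr : 0 < r)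
    (hL : ∀ ξ, |ξ - x| < r → ‖f ξ - f x‖ ≤ C * |ξ - x|) :
    ∃ A : ℂ, ∀ K : ℝ → ℝ → ℝ, (∀ ε > 0, Measurable (K ε)) → (∀ ε > 0, ∀ y, K ε (-y) = -K ε y) →
      (∀ ε > 0, ∀ y, |K ε y| ≤ 1 / |y|) → (∀ ε > 0, ∀ y, |K ε y| ≤ 1 / ε) →
      (∀ y ≠ 0, Tendsto (fun ε => K ε y) (𝓝[>] 0) (𝓝 (1 / y))) →
      Tendsto (fun ε => ∫ ξ in Set.Ioo (-1:ℝ) 1, f ξ * (K ε (x - ξ) : ℂ)) (𝓝[>] 0) (𝓝 A) := by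
  -- shrink the radius
  obtain ⟨ρ, hρ, hρr, hρ1, hρ2⟩ : ∃ ρ > 0, ρ ≤ r ∧ -1 ≤ x - ρ ∧ x + ρ ≤ 1 := by
    refine ⟨min r (min (x + 1) (1 - x)), ?_, min_le_left _ _, ?_, ?_⟩
    · exact lt_min hr (lt_min (by linarith [hx.1]) (by linarith [hx.2]))
    · have := (min_le_right r (min (x + 1) (1 - x))).trans (min_le_left _ _); linarith
    · have := (min_le_right r (min (x + 1) (1 - x))).trans (min_le_right _ _); linarith
  set g : ℝ → ℂ := fun ξ => f ξ - (Set.Ioo (x - ρ) (x + ρ)).indicator (fun _ => f x) ξ with hg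
  have hsub : Set.Ioo (x - ρ) (x + ρ) ⊆ Set.Ioo (-1:ℝ) 1 := Set.Ioo_subset_Ioo hρ1 hρ2
  have hgint : IntegrableOn g (Set.Ioo (-1) 1) := by
    refine hf.sub ?_
    refine (IntegrableOn.integrable_indicator ?_ measurableSet_Ioo)
    exact integrableOn_const (by
      rw [Measure.restrict_apply measurableSet_Ioo]
      exact (lt_of_le_of_lt (measure_mono Set.inter_subset_left) measure_Ioo_lt_top).ne)
  have hgb : ∀ ξ, ‖g ξ‖ * (1 / |x - ξ|) ≤ |C| + ‖g ξ‖ * (1 / ρ) := by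
    intro ξ
    by_cases h : ξ ∈ Set.Ioo (x - ρ) (x + ρ)
    · have h1 : |ξ - x| < r := by
        rw [abs_lt]; constructor <;> linarith [h.1, h.2]
      have h2 := hL ξ h1
      have h3 : g ξ = f ξ - f x := by simp [hg, Set.indicator_of_mem h]
      rw [h3, abs_sub_comm x ξ]
      have h4 : ‖f ξ - f x‖ * (1 / |ξ - x|) ≤ |C| := by
        rcases eq_or_ne ξ x with rfl | hne
        · simp
        · have : 0 < |ξ - x| := abs_pos.mpr (sub_ne_zero.mpr hne)
          rw [mul_one_div, div_le_iff₀ this]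
          exact h2.trans (mul_le_mul_of_nonneg_right (le_abs_self C) this.le)
      have : 0 ≤ ‖f ξ - f x‖ * (1 / ρ) := by positivity
      linarith
    · have h1 : ρ ≤ |x - ξ| := by
        by_contra hc
        push Not at hc
        rw [abs_lt] at hc
        exact h ⟨by linarith [hc.1, hc.2], by linarith [hc.1, hc.2]⟩
      have := one_div_le_one_div_of_le hρ h1
      have := mul_le_mul_of_nonneg_left this (norm_nonneg (g ξ))
      have := abs_nonneg C
      linarith
  have hdom : IntegrableOn (fun ξ => |C| + ‖g ξ‖ * (1 / ρ)) (Set.Ioo (-1:ℝ) 1) :=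
    (integrableOn_const (by simp)).add (hgint.norm.mul_const _)
  refine ⟨∫ ξ in Set.Ioo (-1:ℝ) 1, g ξ * ((1 / (x - ξ) : ℝ) : ℂ), ?_⟩
  intro K hKm hKo hK1 hK2 hKt
  have hmeas : ∀ ε > 0, Measurable (fun ξ : ℝ => ((K ε (x - ξ) : ℝ) : ℂ)) := fun ε hε =>
    Complex.measurable_ofReal.comp ((hKm ε hε).comp (measurable_const.sub measurable_id))
  have hmain : Tendsto (fun ε => ∫ ξ in Set.Ioo (-1:ℝ) 1, g ξ * (K ε (x - ξ) : ℂ)) (𝓝[>] 0)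
      (𝓝 (∫ ξ in Set.Ioo (-1:ℝ) 1, g ξ * ((1 / (x - ξ) : ℝ) : ℂ))) := by
    refine tendsto_integral_filter_of_dominated_convergence _ ?_ ?_ hdom ?_
    · filter_upwards [self_mem_nhdsWithin] with ε hε
      exact hgint.aestronglyMeasurable.mul (hmeas ε hε).aestronglyMeasurable
    · filter_upwards [self_mem_nhdsWithin] with ε hε
      refine Eventually.of_forall fun ξ => ?_
      rw [norm_mul, Complex.norm_real, Real.norm_eq_abs]
      exact (mul_le_mul_of_nonneg_left (hK1 ε hε _) (norm_nonneg _)).trans (hgb ξ)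
    · have : ∀ᵐ ξ ∂(volume.restrict (Set.Ioo (-1:ℝ) 1)), ξ ≠ x :=
        ae_restrict_of_ae (Measure.ae_ne volume x)
      filter_upwards [this] with ξ hξ
      refine Tendsto.const_mul _ ?_
      exact (Complex.continuous_ofReal.tendsto _).comp (hKt _ (sub_ne_zero.mpr hξ.symm))
  refine hmain.congr' ?_
  filter_upwards [self_mem_nhdsWithin] with ε hε
  have hbd : ∀ h : ℝ → ℂ, IntegrableOn h (Set.Ioo (-1) 1) →
      IntegrableOn (fun ξ => h ξ * (K ε (x - ξ) : ℂ)) (Set.Ioo (-1) 1) := by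
    intro h hh
    refine hh.mul_bdd (c := 1 / ε) (hmeas ε hε).aestronglyMeasurable ?_
    refine Eventually.of_forall fun ξ => ?_
    rw [Complex.norm_real, Real.norm_eq_abs]; exact hK2 ε hε _
  have hzero : ∫ ξ in Set.Ioo (-1:ℝ) 1,
      (Set.Ioo (x - ρ) (x + ρ)).indicator (fun _ => f x) ξ * (K ε (x - ξ) : ℂ) = 0 := by
    have h1 : ∀ ξ, (Set.Ioo (x - ρ) (x + ρ)).indicator (fun _ => f x) ξ * (K ε (x - ξ) : ℂ)
        = (Set.Ioo (x - ρ) (x + ρ)).indicator (fun ξ => f x * (K ε (x - ξ) : ℂ)) ξ := by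
      intro ξ; by_cases h : ξ ∈ Set.Ioo (x - ρ) (x + ρ)
      · simp only [Set.indicator_of_mem h]
      · simp only [Set.indicator_of_notMem h, zero_mul]
    simp_rw [h1]
    rw [setIntegral_indicator measurableSet_Ioo, Set.inter_eq_self_of_subset_right hsub,
      MeasureTheory.integral_const_mul, ← integral_Ioc_eq_integral_Ioo,
      ← intervalIntegral.integral_of_le (by linarith)]
    have h2 : ∫ ξ in (x - ρ)..(x + ρ), ((K ε (x - ξ) : ℝ) : ℂ) = ∫ y in (-ρ)..ρ, ((K ε y : ℝ) : ℂ) := by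
      rw [intervalIntegral.integral_comp_sub_left (fun y => ((K ε y : ℝ) : ℂ)) x]
      congr 1 <;> ring
    have h3 : ∫ y in (-ρ)..ρ, ((K ε y : ℝ) : ℂ) = -∫ y in (-ρ)..ρ, ((K ε y : ℝ) : ℂ) := by
      conv_lhs => rw [← neg_neg ρ, ← intervalIntegral.integral_comp_neg, neg_neg]
      rw [← intervalIntegral.integral_neg]
      simp_rw [hKo ε hε]
      push_cast; rfl
    rw [h2]
    have : ∫ y in (-ρ)..ρ, ((K ε y : ℝ) : ℂ) = 0 := by
      linear_combination (1/2 : ℂ) * h3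
    rw [this, mul_zero]
  have hind : IntegrableOn ((Set.Ioo (x - ρ) (x + ρ)).indicator (fun _ => f x)) (Set.Ioo (-1) 1) := by
    have := hf.sub hgint
    refine this.congr (Eventually.of_forall fun ξ => ?_)
    simp [hg]
  have : ∀ ξ, g ξ * (K ε (x - ξ) : ℂ) = f ξ * (K ε (x - ξ) : ℂ) -
      (Set.Ioo (x - ρ) (x + ρ)).indicator (fun _ => f x) ξ * (K ε (x - ξ) : ℂ) := by
    intro ξ; simp only [hg]; ring
  simp_rw [this]
  rw [integral_sub (hbd f hf) (hbd _ hind), hzero, sub_zero]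

/-- From the symmetric regularisation to the principal value. -/
lemma pv_of_reg (f : ℝ → ℂ) (hf : IntegrableOn f (Set.Ioo (-1) 1)) (x : ℝ)
    (hx : x ∈ Set.Ioo (-1:ℝ) 1) (C r : ℝ) (hr : 0 < r)
    (hL : ∀ ξ, |ξ - x| < r → ‖f ξ - f x‖ ≤ C * |ξ - x|) (A : ℂ)
    (hreg : Tendsto (fun δ : ℝ => ((∫ ξ in Set.Ioo (-1:ℝ) 1, f ξ / ((x:ℂ) + δ * Complex.I - ξ)) +
      ∫ ξ in Set.Ioo (-1:ℝ) 1, f ξ / ((x:ℂ) - δ * Complex.I - ξ))) (𝓝[>] 0) (𝓝 (4 * A))) :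
    Tendsto (fun ε : ℝ =>
        ∫ ξ in {ξ : ℝ | ξ ∈ Set.Ioo (-1:ℝ) 1 ∧ ε < |ξ - x|}, f ξ / (2 * ((x - ξ : ℝ) : ℂ)))
      (𝓝[>] 0) (𝓝 A) := by
  obtain ⟨B, hB⟩ := pv_aux f hf x hx C r hr hL
  have h1 := hB (fun ε y => y / (y ^ 2 + ε ^ 2)) (fun ε hε => by fun_prop)
    (fun ε hε y => by simp [neg_div])
    (fun ε hε y => by
      rcases eq_or_ne y 0 with rfl | hy
      · simp
      have h0 : 0 < y ^ 2 := by positivity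
      rw [abs_div, abs_of_pos (by positivity : 0 < y ^ 2 + ε ^ 2), div_le_div_iff₀ (by positivity) (abs_pos.mpr hy)]
      nlinarith [sq_abs y, sq_nonneg ε])
    (fun ε hε y => by
      have hε' : (0:ℝ) < ε := hε
      rw [abs_div, abs_of_pos (by positivity : 0 < y ^ 2 + ε ^ 2), div_le_div_iff₀ (by positivity) hε']
      nlinarith [sq_abs y, sq_nonneg (|y| - ε), abs_nonneg y, sq_nonneg ε])
    (fun y hy => by
      have : Tendsto (fun ε : ℝ => y / (y ^ 2 + ε ^ 2)) (𝓝 0) (𝓝 (y / (y ^ 2 + 0 ^ 2))) := by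
        refine Tendsto.div tendsto_const_nhds ?_ (by positivity)
        exact (tendsto_const_nhds).add ((continuous_pow 2).tendsto 0)
      have h2 : y / (y ^ 2 + 0 ^ 2) = 1 / y := by field_simp; ring
      rw [h2] at this
      exact this.mono_left nhdsWithin_le_nhds)
  have h2 := hB (fun ε y => if ε < |y| then 1 / y else 0)
    (fun ε hε => Measurable.ite (measurableSet_lt measurable_const (by fun_prop)) (by fun_prop) measurable_const)
    (fun ε hε y => by
      simp only [abs_neg]
      split_ifs
      · rw [div_neg]
      · simp)
    (fun ε hε y => by
      split_ifs
      · rw [abs_div, abs_one]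
      · simp)
    (fun ε hε y => by
      have hε' : (0:ℝ) < ε := hε
      split_ifs with h
      · rw [abs_div, abs_one]; exact one_div_le_one_div_of_le hε' h.le
      · simp [hε'.le])
    (fun y hy => by
      refine tendsto_const_nhds.congr' ?_
      have : Set.Iio |y| ∈ 𝓝[>] (0:ℝ) := mem_nhdsWithin_of_mem_nhds (Iio_mem_nhds (abs_pos.mpr hy))
      filter_upwards [this] with ε hε
      rw [if_pos (Set.mem_Iio.mp hε)])
  -- identify B
  have hBA : B = 2 * A := by
    have h3 : Tendsto (fun δ : ℝ => ((∫ ξ in Set.Ioo (-1:ℝ) 1, f ξ / ((x:ℂ) + δ * Complex.I - ξ)) +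
      ∫ ξ in Set.Ioo (-1:ℝ) 1, f ξ / ((x:ℂ) - δ * Complex.I - ξ))) (𝓝[>] 0) (𝓝 (2 * B)) := by
      refine (h1.const_mul (2:ℂ)).congr' ?_
      filter_upwards [self_mem_nhdsWithin] with δ hδ
      have hδ' : (0:ℝ) < δ := hδ
      have key : ∀ c : ℂ, |c.im| = δ → IntegrableOn (fun ξ : ℝ => f ξ / (c - ξ)) (Set.Ioo (-1) 1) := by
        intro c hc
        simp_rw [div_eq_mul_inv]
        refine hf.mul_bdd (c := 1 / δ) ?_ ?_
        · exact (by fun_prop : Measurable (fun ξ : ℝ => (c - (ξ:ℂ))⁻¹)).aestronglyMeasurable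
        · refine Eventually.of_forall fun ξ => ?_
          rw [norm_inv, ← one_div]
          refine one_div_le_one_div_of_le hδ' ?_
          have := Complex.abs_im_le_norm (c - ξ)
          simpa [hc] using this
      rw [← integral_add (key _ (by simp [abs_of_pos hδ'])) (key _ (by simp [abs_of_pos hδ'])),
        ← MeasureTheory.integral_const_mul]
      refine integral_congr_ae (Eventually.of_forall fun ξ => ?_)
      have e1 : (x:ℂ) + δ * Complex.I - ξ ≠ 0 := fun h => by
        have := congrArg Complex.im h; simp at this; exact hδ'.ne' this
      have e2 : (x:ℂ) - δ * Complex.I - ξ ≠ 0 := fun h => by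
        have := congrArg Complex.im h; simp at this; exact hδ'.ne' this
      have e3 : ((x:ℂ) - ξ) ^ 2 + (δ:ℂ) ^ 2 = ((x:ℂ) + δ * Complex.I - ξ) * ((x:ℂ) - δ * Complex.I - ξ) := by
        linear_combination ((δ:ℂ)^2) * Complex.I_sq
      simp only []
      push_cast
      rw [e3]
      field_simp
      ring
    have := tendsto_nhds_unique h3 hreg
    linear_combination (1/2 : ℂ) * this
  have h4 := h2.const_mul (1/2 : ℂ)
  rw [hBA, ← mul_assoc, show (1/2 : ℂ) * 2 = 1 by norm_num, one_mul] at h4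
  refine h4.congr' ?_
  filter_upwards [self_mem_nhdsWithin] with ε hε
  have hset : {ξ : ℝ | ξ ∈ Set.Ioo (-1:ℝ) 1 ∧ ε < |ξ - x|} = Set.Ioo (-1:ℝ) 1 ∩ {ξ | ε < |ξ - x|} := rfl
  have hm : MeasurableSet {ξ : ℝ | ε < |ξ - x|} := measurableSet_lt measurable_const (by fun_prop)
  rw [hset, ← setIntegral_indicator hm, ← MeasureTheory.integral_const_mul]
  refine integral_congr_ae (Eventually.of_forall fun ξ => ?_)
  simp only [Set.indicator, Set.mem_ofPred_eq, abs_sub_comm x ξ]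
  split_ifs
  · push_cast; rw [mul_comm (2:ℂ), div_mul_eq_div_div]; ring
  · simp

/-- `∫_0^θ e^{iμβ}/√(2 * cos β - 2 * x) dβ` (the square root vanishes beyond `θ = arccos x`). -/
noncomputable def AA (μ : ℂ) (x : ℝ) : ℂ :=
  ∫ β in Set.Ioo 0 π, Complex.exp (Complex.I * μ * (β:ℂ)) * ((1 / √(2 * (Real.cos β - x)) : ℝ) : ℂ)

noncomputable def MM (μ : ℂ) (x : ℝ) : ℂ :=
  ∫ y in Set.Ioi (0:ℝ), Complex.exp (-μ * (y:ℂ)) * ((1 / √(2 * (Real.cosh y - x)) : ℝ) : ℂ)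

lemma cpow_half_pos (r : ℝ) (hr : 0 < r) :
    (Complex.I * (r:ℂ)) ^ (((-1 / 2 : ℝ)) : ℂ) =
      Complex.exp (-(π * Complex.I / 4)) * ((1 / √r : ℝ) : ℂ) := by
  have h0 : Complex.I * (r:ℂ) ≠ 0 := mul_ne_zero Complex.I_ne_zero (by exact_mod_cast hr.ne')
  have h1 : 1 / √r = Real.exp (Real.log r * (-1/2)) := by
    rw [Real.sqrt_eq_rpow, one_div, ← Real.rpow_neg hr.le, Real.rpow_def_of_pos hr]; norm_num
  rw [Complex.cpow_def_of_ne_zero h0, mul_comm Complex.I, Complex.log_ofReal_mul hr Complex.I_ne_zero,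
    Complex.log_I, h1, Complex.ofReal_exp, ← Complex.exp_add]
  congr 1
  push_cast; ring

lemma cpow_half_neg (r : ℝ) (hr : 0 < r) :
    (Complex.I * ((-r : ℝ):ℂ)) ^ (((-1 / 2 : ℝ)) : ℂ) =
      Complex.exp (-(π * Complex.I / 4)) * (Complex.I * ((1 / √r : ℝ) : ℂ)) := by
  have h0 : Complex.I * ((-r : ℝ):ℂ) ≠ 0 := mul_ne_zero Complex.I_ne_zero (by exact_mod_cast (neg_lt_zero.mpr hr).ne)
  have h1 : 1 / √r = Real.exp (Real.log r * (-1/2)) := by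
    rw [Real.sqrt_eq_rpow, one_div, ← Real.rpow_neg hr.le, Real.rpow_def_of_pos hr]; norm_num
  have h2 : Complex.I * ((-r : ℝ):ℂ) = (r:ℂ) * (-Complex.I) := by push_cast; ring
  have h3 : Complex.I = Complex.exp (π * Complex.I / 2) := by
    rw [show (π:ℂ) * Complex.I / 2 = (π / 2 : ℂ) * Complex.I by ring, Complex.exp_pi_div_two_mul_I]
  rw [Complex.cpow_def_of_ne_zero h0, h2, Complex.log_ofReal_mul hr (neg_ne_zero.mpr Complex.I_ne_zero),
    Complex.log_neg_I, h1, Complex.ofReal_exp]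
  nth_rewrite 3 [h3]
  rw [← Complex.exp_add, ← Complex.exp_add]
  congr 1
  push_cast; ring

lemma normSq_cos_sub (a y x : ℝ) :
    ‖2 * Complex.cos ((a:ℂ) + y * Complex.I) - 2 * (x:ℂ)‖ ^ 2 =
      4 * ((Real.cos a * Real.cosh y - x) ^ 2 + (Real.sin a * Real.sinh y) ^ 2) := by
  have : Complex.cos ((a:ℂ) + y * Complex.I) = ((Real.cos a * Real.cosh y : ℝ) : ℂ) - ((Real.sin a * Real.sinh y : ℝ) : ℂ) * Complex.I := by
    rw [Complex.cos_add_mul_I]; push_cast; rfl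
  rw [this, ← Complex.normSq_eq_norm_sq, Complex.normSq_apply]
  generalize Real.cos a * Real.cosh y = u
  generalize Real.sin a * Real.sinh y = v
  simp
  ring

lemma norm_cos_sub_ge1 (a y x : ℝ) (hx : x ∈ Set.Ioo (-1:ℝ) 1) :
    2 * |Real.cos a - x| ≤ ‖2 * Complex.cos ((a:ℂ) + y * Complex.I) - 2 * (x:ℂ)‖ := by
  refine le_of_sq_le_sq ?_ (norm_nonneg _)
  rw [normSq_cos_sub, mul_pow, sq_abs]
  have h1 := Real.one_le_cosh y
  have h2 := Real.cosh_sq y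
  have h3 := Real.sin_sq_add_cos_sq a
  have h4 := Real.cos_le_one a
  have h5 := Real.neg_one_le_cos a
  have h6 : 0 ≤ Real.cosh y + 1 - 2 * (x * Real.cos a) := by nlinarith [hx.1, hx.2]
  have e : (Real.cos a * Real.cosh y - x) ^ 2 + (Real.sin a * Real.sinh y) ^ 2 - (Real.cos a - x) ^ 2 =
      (Real.cosh y - 1) * (Real.cosh y + 1 - 2 * (x * Real.cos a)) := by
    rw [mul_pow (Real.sin a), show Real.sinh y ^ 2 = Real.cosh y ^ 2 - 1 by linarith,
      show Real.sin a ^ 2 = 1 - Real.cos a ^ 2 by linarith]; ring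
  nlinarith [mul_nonneg (sub_nonneg.mpr h1) h6]

lemma norm_cos_sub_ge2 (a y x : ℝ) (hx : x ∈ Set.Ioo (-1:ℝ) 1) :
    2 * (Real.cosh y - 1) ≤ ‖2 * Complex.cos ((a:ℂ) + y * Complex.I) - 2 * (x:ℂ)‖ := by
  refine le_of_sq_le_sq ?_ (norm_nonneg _)
  rw [normSq_cos_sub, mul_pow]
  have h1 := Real.one_le_cosh y
  have h2 := Real.cosh_sq y
  have h3 := Real.sin_sq_add_cos_sq a
  have h4 := Real.cos_le_one a
  have h5 := Real.neg_one_le_cos a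
  have h6 : 0 ≤ 1 - x * Real.cos a := by nlinarith [hx.1, hx.2]
  have e : (Real.cos a * Real.cosh y - x) ^ 2 + (Real.sin a * Real.sinh y) ^ 2 - (Real.cosh y - 1) ^ 2 =
      2 * (Real.cosh y - 1) * (1 - x * Real.cos a) + (Real.cos a - x) ^ 2 := by
    rw [mul_pow (Real.sin a), show Real.sinh y ^ 2 = Real.cosh y ^ 2 - 1 by linarith,
      show Real.sin a ^ 2 = 1 - Real.cos a ^ 2 by linarith]; ring
  nlinarith [mul_nonneg (sub_nonneg.mpr h1) h6, sq_nonneg (Real.cos a - x)]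

lemma half_cosh_ge (x y : ℝ) (hx : x ∈ Set.Ioo (-1:ℝ) 1) :
    (1 - |x|) * Real.exp y ≤ 2 * (Real.cosh y - x) := by
  have h1 := Real.one_le_cosh y
  have h2 : Real.exp y ≤ 2 * Real.cosh y := by
    rw [Real.cosh_eq]; have := Real.exp_pos (-y); linarith
  have h3 : |x| < 1 := abs_lt.mpr hx
  have h4 := le_abs_self x
  have h5 := abs_nonneg x
  nlinarith

lemma MM_integrable (μ : ℂ) (hμ : -1/2 < μ.re) (x : ℝ) (hx : x ∈ Set.Ioo (-1:ℝ) 1) :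
    IntegrableOn (fun y : ℝ => Complex.exp (-μ * (y:ℂ)) * ((1 / √(2 * (Real.cosh y - x)) : ℝ) : ℂ)) (Set.Ioi 0) := by
  have h3 : 0 < 1 - |x| := by have := abs_lt.mpr hx; linarith
  have hb := (exp_neg_integrableOn_Ioi 0 (show 0 < μ.re + 1/2 by linarith)).const_mul ((1 - |x|) ^ (-1/2 : ℝ))
  refine Integrable.mono' hb ?_ ?_
  · refine (Measurable.aestronglyMeasurable ?_)
    have : Measurable (fun y : ℝ => 1 / √(2 * (Real.cosh y - x))) := by
      have := Real.measurable_cosh; fun_prop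
    exact (by fun_prop : Measurable (fun y : ℝ => Complex.exp (-μ * (y:ℂ)))).mul (Complex.measurable_ofReal.comp this)
  · refine Eventually.of_forall fun y => ?_
    have h4 := half_cosh_ge x y hx
    have h5 : 0 < (1 - |x|) * Real.exp y := by positivity
    rw [norm_mul, Complex.norm_exp, Complex.norm_real, Real.norm_of_nonneg (by positivity)]
    have h6 : 1 / √(2 * (Real.cosh y - x)) ≤ (1 - |x|) ^ (-1/2 : ℝ) * Real.exp (-y/2) := by
      have : 1 / √(2 * (Real.cosh y - x)) = (2 * (Real.cosh y - x)) ^ (-1/2 : ℝ) := by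
        rw [Real.sqrt_eq_rpow, one_div, ← Real.rpow_neg (by linarith)]; norm_num
      rw [this]
      refine (Real.rpow_le_rpow_of_nonpos h5 h4 (by norm_num)).trans (le_of_eq ?_)
      rw [Real.mul_rpow h3.le (Real.exp_pos _).le, ← Real.exp_mul]
      congr 2; ring
    have e : (-μ * (y:ℂ)).re = -μ.re * y := by simp
    rw [e]
    calc _ ≤ Real.exp (-μ.re * y) * ((1 - |x|) ^ (-1/2 : ℝ) * Real.exp (-y/2)) :=
          mul_le_mul_of_nonneg_left h6 (Real.exp_pos _).le
      _ = (1 - |x|) ^ (-1/2 : ℝ) * (Real.exp (-μ.re * y) * Real.exp (-y/2)) := by ring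
      _ = _ := by rw [← Real.exp_add]; congr 2; ring

lemma norm_expI (μ : ℂ) (a y : ℝ) :
    ‖Complex.exp (Complex.I * μ * ((a:ℂ) + y * Complex.I))‖ = Real.exp (-(μ.im * a) - μ.re * y) := by
  rw [Complex.norm_exp]; congr 1; simp; try ring

lemma AA_integrable (μ : ℂ) (x : ℝ) (hx : x ∈ Set.Ioo (-1:ℝ) 1) :
    IntegrableOn (fun β : ℝ => Complex.exp (Complex.I * μ * (β:ℂ)) * ((1 / √(2 * (Real.cos β - x)) : ℝ) : ℂ)) (Set.Ioo 0 π) := by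
  have hθ : Real.arccos x ∈ Set.Ioo 0 π := ⟨Real.arccos_pos.mpr hx.2, by
    have h1 := Real.arccos_lt_arccos le_rfl hx.1 hx.2.le
    rwa [Real.arccos_neg_one] at h1⟩
  have hcx : Real.cos (Real.arccos x) = x := Real.cos_arccos hx.1.le hx.2.le
  have := io_abs_cos_sub _ hθ
  rw [hcx] at this
  refine Integrable.mono' (this.const_mul (Real.exp (|μ.im| * π))) ?_ ?_
  · refine (Measurable.aestronglyMeasurable ?_)
    fun_prop
  · filter_upwards [ae_restrict_mem measurableSet_Ioo] with β hβ
    rw [norm_mul, Complex.norm_real, Real.norm_of_nonneg (by positivity)]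
    have h1 := norm_expI μ β 0
    simp only [Complex.ofReal_zero, zero_mul, add_zero, mul_zero, sub_zero] at h1
    rw [h1]
    refine mul_le_mul ?_ ?_ (by positivity) (Real.exp_pos _).le
    · refine Real.exp_le_exp.mpr ?_
      have h2 := neg_abs_le μ.im
      have h3 := abs_nonneg μ.im
      nlinarith [hβ.1, hβ.2]
    · rcases le_or_gt (Real.cos β - x) 0 with h | h
      · rw [Real.sqrt_eq_zero_of_nonpos (by linarith)]; simp; positivity
      · rw [abs_of_pos h, Real.sqrt_eq_rpow, one_div, ← Real.rpow_neg (by linarith)]; norm_num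

lemma strip (μ : ℂ) (hμ : -1/2 < μ.re) (x : ℝ) (hx : x ∈ Set.Ioo (-1:ℝ) 1) :
    AA μ x + Complex.I * Complex.exp (Complex.I * μ * π) * AA (-μ) (-x)
      - Complex.exp (Complex.I * μ * π) * MM μ (-x) - Complex.I * MM μ x = 0 := by
  have hpi := Real.pi_pos
  have hθ : Real.arccos x ∈ Set.Ioo 0 π := ⟨Real.arccos_pos.mpr hx.2, by
    have h1 := Real.arccos_lt_arccos le_rfl hx.1 hx.2.le
    rwa [Real.arccos_neg_one] at h1⟩
  have hcx : Real.cos (Real.arccos x) = x := Real.cos_arccos hx.1.le hx.2.le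
  have hx' : -x ∈ Set.Ioo (-1:ℝ) 1 := ⟨by linarith [hx.2], by linarith [hx.1]⟩
  set E := Complex.exp (-(π * Complex.I / 4)) with hE
  have hE0 : E ≠ 0 := Complex.exp_ne_zero _
  set f : ℂ → ℂ := fun β => Complex.exp (Complex.I * μ * β) *
    (Complex.I * (2 * Complex.cos β - 2 * (x:ℂ))) ^ (((-1 / 2 : ℝ)) : ℂ) with hf
  have hcos : ∀ a y : ℝ, Complex.cos ((a:ℂ) + y * Complex.I) = ((Real.cos a * Real.cosh y : ℝ) : ℂ) - ((Real.sin a * Real.sinh y : ℝ) : ℂ) * Complex.I := by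
    intro a y
    rw [Complex.cos_add_mul_I]; push_cast; rfl
  have hdiff : ∀ a y : ℝ, a ∈ Set.Icc 0 π → 0 < y → DifferentiableAt ℂ f ((a:ℂ) + y * Complex.I) := by
    intro a y ha hy
    have hs : Complex.I * (2 * Complex.cos ((a:ℂ) + y * Complex.I) - 2 * (x:ℂ)) ∈ Complex.slitPlane := by
      rw [hcos]
      have hsy : 0 < Real.sinh y := Real.sinh_pos_iff.mpr hy
      have hch : 1 < Real.cosh y := Real.one_lt_cosh.mpr hy.ne'
      rw [Complex.mem_slitPlane_iff]
      rcases eq_or_lt_of_le ha.1 with h | h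
      · right
        simp [← h]
        intro h; linarith [hx.2]
      rcases eq_or_lt_of_le ha.2 with h' | h'
      · right
        simp [h']
        intro h; linarith [hx.1]
      · left
        have : 0 < Real.sin a := Real.sin_pos_of_pos_of_lt_pi h h'
        simp
        positivity
    refine DifferentiableAt.mul (by fun_prop) ?_
    exact DifferentiableAt.cpow (by fun_prop) (by fun_prop) hs
  have hnorm : ∀ a y : ℝ, ‖f ((a:ℂ) + y * Complex.I)‖ = Real.exp (-(μ.im * a) - μ.re * y) *
      ‖2 * Complex.cos ((a:ℂ) + y * Complex.I) - 2 * (x:ℂ)‖ ^ (-1/2 : ℝ) := by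
    intro a y
    rw [hf]
    simp only []
    rw [norm_mul, norm_expI, Complex.norm_cpow_real, norm_mul, Complex.norm_I, one_mul]
  have hexp : ∀ a y : ℝ, a ∈ Set.Ioc 0 π → Real.exp (-(μ.im * a) - μ.re * y) ≤ Real.exp (|μ.im| * π) * Real.exp (-μ.re * y) := by
    intro a y ha
    rw [← Real.exp_add]
    refine Real.exp_le_exp.mpr ?_
    have h2 := neg_abs_le μ.im
    have h3 := abs_nonneg μ.im
    nlinarith [ha.1, ha.2]
  -- rectangle identity
  have hrect : ∀ N : ℝ, 1 < N →
      (∫ a in (0:ℝ)..π, f ((a:ℂ) + ((1 / N : ℝ):ℂ) * Complex.I)) - (∫ a in (0:ℝ)..π, f ((a:ℂ) + (N:ℂ) * Complex.I))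
      + Complex.I * (∫ y in (1 / N)..N, f ((π:ℂ) + (y:ℂ) * Complex.I)) - Complex.I * (∫ y in (1 / N)..N, f ((0:ℝ) + (y:ℂ) * Complex.I)) = 0 := by
    intro N hN
    have hN0 : 0 < N := by linarith
    have hN1 : 0 < 1 / N := by positivity
    have hle : 1 / N ≤ N := by rw [div_le_iff₀ hN0]; nlinarith
    have := Complex.integral_boundary_rect_eq_zero_of_differentiableOn f ⟨0, 1 / N⟩ ⟨π, N⟩ ?_
    · simpa only [smul_eq_mul] using this
    · intro z hz
      rw [Complex.mem_reProdIm] at hz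
      simp only [Set.uIcc_of_le hpi.le, Set.uIcc_of_le hle] at hz
      have := hdiff z.re z.im hz.1 (lt_of_lt_of_le hN1 hz.2.1)
      rw [Complex.re_add_im] at this
      exact this.differentiableWithinAt
  -- top
  have htop : Tendsto (fun N : ℝ => ∫ a in (0:ℝ)..π, f ((a:ℂ) + (N:ℂ) * Complex.I)) atTop (𝓝 0) := by
    have hlim : Tendsto (fun N : ℝ => (Real.exp (|μ.im| * π) * 4 ^ (1/2 : ℝ)) * Real.exp (-((μ.re + 1/2) * N)) * π) atTop (𝓝 0) := by
      have h1 : Tendsto (fun N : ℝ => Real.exp (-((μ.re + 1/2) * N))) atTop (𝓝 0) :=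
        Real.tendsto_exp_neg_atTop_nhds_zero.comp (tendsto_id.const_mul_atTop (by linarith : 0 < μ.re + 1/2))
      have := (h1.const_mul (Real.exp (|μ.im| * π) * 4 ^ (1/2 : ℝ))).mul_const π
      simpa using this
    refine squeeze_zero_norm' ?_ hlim
    filter_upwards [eventually_ge_atTop 4] with N hN
    have hb : ∀ a ∈ Set.uIoc 0 π, ‖f ((a:ℂ) + (N:ℂ) * Complex.I)‖ ≤ (Real.exp (|μ.im| * π) * 4 ^ (1/2 : ℝ)) * Real.exp (-((μ.re + 1/2) * N)) := by
      intro a ha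
      rw [Set.uIoc_of_le hpi.le] at ha
      rw [hnorm]
      have h1 := norm_cos_sub_ge2 a N x hx
      have h2 : Real.exp N / 4 ≤ 2 * (Real.cosh N - 1) := by
        rw [Real.cosh_eq]
        have := Real.exp_pos (-N)
        have := Real.add_one_le_exp N
        linarith
      have h3 := Real.rpow_le_rpow_of_nonpos (by positivity) (h2.trans h1) (show (-1/2 : ℝ) ≤ 0 by norm_num)
      have h4 : (Real.exp N / 4) ^ (-1/2 : ℝ) = 4 ^ (1/2 : ℝ) * Real.exp (-N/2) := by
        rw [Real.div_rpow (Real.exp_pos _).le (by norm_num), ← Real.exp_mul, show (-1/2 : ℝ) = -(1/2) by norm_num,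
          Real.rpow_neg (by norm_num), div_inv_eq_mul, mul_comm]
        congr 2; ring
      calc _ ≤ (Real.exp (|μ.im| * π) * Real.exp (-μ.re * N)) * (4 ^ (1/2 : ℝ) * Real.exp (-N/2)) := by
            refine mul_le_mul (hexp a N ha) (h3.trans h4.le) (by positivity) (by positivity)
        _ = (Real.exp (|μ.im| * π) * 4 ^ (1/2 : ℝ)) * (Real.exp (-μ.re * N) * Real.exp (-N/2)) := by ring
        _ = _ := by rw [← Real.exp_add]; congr 2; ring
    have := intervalIntegral.norm_integral_le_of_norm_le_const hb
    simpa [abs_of_pos hpi] using this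
  -- bottom
  have hbot : Tendsto (fun N : ℝ => ∫ a in (0:ℝ)..π, f ((a:ℂ) + ((1 / N : ℝ):ℂ) * Complex.I)) atTop (𝓝 (∫ a in (0:ℝ)..π, f a)) := by
    simp only [intervalIntegral.integral_of_le hpi.le, integral_Ioc_eq_integral_Ioo]
    have hI := io_abs_cos_sub _ hθ
    rw [hcx] at hI
    refine tendsto_integral_filter_of_dominated_convergence
      (fun a => (Real.exp (|μ.im| * π) * Real.exp (|μ.re|)) * (2 * |Real.cos a - x|) ^ (-1 / 2 : ℝ)) ?_ ?_ (hI.const_mul _) ?_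
    · refine Eventually.of_forall fun N => Measurable.aestronglyMeasurable ?_
      simp only [hf]
      fun_prop
    · filter_upwards [eventually_ge_atTop 1] with N hN
      have : ∀ᵐ a ∂(volume.restrict (Set.Ioo (0:ℝ) π)), a ≠ Real.arccos x :=
        ae_restrict_of_ae (Measure.ae_ne volume _)
      filter_upwards [this, ae_restrict_mem measurableSet_Ioo] with a ha ha2
      have hca : 0 < |Real.cos a - x| := by
        refine abs_pos.mpr (sub_ne_zero.mpr fun h => ha ?_)
        rw [← h, Real.arccos_cos ha2.1.le ha2.2.le]
      rw [hnorm]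
      have hN1 : 0 < 1 / N := by positivity
      have hN2 : 1 / N ≤ 1 := by rw [div_le_one (by linarith)]; exact hN
      refine mul_le_mul ((hexp a _ ⟨ha2.1, ha2.2.le⟩).trans (mul_le_mul_of_nonneg_left ?_ (Real.exp_pos _).le)) ?_ (by positivity) (by positivity)
      · refine Real.exp_le_exp.mpr ?_
        have h2 := neg_abs_le μ.re
        have h3 := abs_nonneg μ.re
        nlinarith
      · exact Real.rpow_le_rpow_of_nonpos (by positivity) (norm_cos_sub_ge1 a _ x hx) (by norm_num)
    · have : ∀ᵐ a ∂(volume.restrict (Set.Ioo (0:ℝ) π)), a ≠ Real.arccos x :=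
        ae_restrict_of_ae (Measure.ae_ne volume _)
      filter_upwards [this, ae_restrict_mem measurableSet_Ioo] with a ha ha2
      have hca : Real.cos a - x ≠ 0 := by
        refine (sub_ne_zero.mpr fun h => ha ?_)
        rw [← h, Real.arccos_cos ha2.1.le ha2.2.le]
      have hc : ContinuousAt f (a:ℂ) := by
        refine DifferentiableAt.continuousAt (𝕜 := ℂ) ?_
        refine DifferentiableAt.mul (by fun_prop) ?_
        refine DifferentiableAt.cpow (by fun_prop) (by fun_prop) ?_
        rw [Complex.mem_slitPlane_iff]
        right
        rw [← Complex.ofReal_cos]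
        simp
        intro h; apply hca; rw [Complex.cos_ofReal_re] at h; linarith
      have ht : Tendsto (fun N : ℝ => (a:ℂ) + ((1 / N : ℝ):ℂ) * Complex.I) atTop (𝓝 (a:ℂ)) := by
        have h0 : Tendsto (fun N : ℝ => 1 / N) atTop (𝓝 0) := by
          simp only [one_div]
          exact tendsto_inv_atTop_zero
        have h1 : Tendsto (fun N : ℝ => ((1 / N : ℝ):ℂ)) atTop (𝓝 ((0:ℝ):ℂ)) :=
          (Complex.continuous_ofReal.tendsto _).comp h0
        have := (h1.mul_const Complex.I).const_add (a:ℂ)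
        simpa using this
      exact hc.tendsto.comp ht
  -- values on the sides
  have hleft : ∀ y : ℝ, 0 < y → f ((0:ℝ) + (y:ℂ) * Complex.I) = E * (Complex.exp (-μ * (y:ℂ)) * ((1 / √(2 * (Real.cosh y - x)) : ℝ) : ℂ)) := by
    intro y hy
    have hch : 1 < Real.cosh y := Real.one_lt_cosh.mpr hy.ne'
    have h1 : 2 * Complex.cos ((0:ℝ) + (y:ℂ) * Complex.I) - 2 * (x:ℂ) = ((2 * (Real.cosh y - x) : ℝ) : ℂ) := by
      rw [hcos]; simp; ring
    have h2 : Complex.I * μ * ((0:ℝ) + (y:ℂ) * Complex.I) = -μ * y := by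
      push_cast; linear_combination (μ * y) * Complex.I_sq
    simp only [hf]
    rw [h1, h2, cpow_half_pos _ (by linarith [hx.2])]
    ring
  have hright : ∀ y : ℝ, 0 < y → f ((π:ℂ) + (y:ℂ) * Complex.I) = (E * Complex.I * Complex.exp (Complex.I * μ * π)) * (Complex.exp (-μ * (y:ℂ)) * ((1 / √(2 * (Real.cosh y - (-x))) : ℝ) : ℂ)) := by
    intro y hy
    have hch : 1 < Real.cosh y := Real.one_lt_cosh.mpr hy.ne'
    have h1 : 2 * Complex.cos ((π:ℂ) + (y:ℂ) * Complex.I) - 2 * (x:ℂ) = ((-(2 * (Real.cosh y - (-x))) : ℝ) : ℂ) := by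
      rw [hcos]; simp; ring
    have h2 : Complex.I * μ * ((π:ℂ) + (y:ℂ) * Complex.I) = Complex.I * μ * π + -μ * y := by
      linear_combination (μ * y) * Complex.I_sq
    simp only [hf]
    rw [h1, h2, cpow_half_neg _ (by linarith [hx.1]), Complex.exp_add]
    ring
  have hL : Tendsto (fun N : ℝ => ∫ y in (1 / N)..N, f ((0:ℝ) + (y:ℂ) * Complex.I)) atTop (𝓝 (E * MM μ x)) := by
    have h1 := (tendsto_int_Ioi _ (MM_integrable μ hμ x hx)).const_mul E
    refine h1.congr' ?_
    filter_upwards [eventually_gt_atTop 1] with N hN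
    rw [← intervalIntegral.integral_const_mul]
    refine intervalIntegral.integral_congr fun y hy => ?_
    have hN1 : 0 < 1 / N := by positivity
    have hle : 1 / N ≤ N := by rw [div_le_iff₀ (by linarith)]; nlinarith
    rw [Set.uIcc_of_le hle] at hy
    exact (hleft y (hN1.trans_le hy.1)).symm
  have hR : Tendsto (fun N : ℝ => ∫ y in (1 / N)..N, f ((π:ℂ) + (y:ℂ) * Complex.I)) atTop (𝓝 ((E * Complex.I * Complex.exp (Complex.I * μ * π)) * MM μ (-x))) := by
    have h1 := (tendsto_int_Ioi _ (MM_integrable μ hμ (-x) hx')).const_mul (E * Complex.I * Complex.exp (Complex.I * μ * π))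
    refine h1.congr' ?_
    filter_upwards [eventually_gt_atTop 1] with N hN
    rw [← intervalIntegral.integral_const_mul]
    refine intervalIntegral.integral_congr fun y hy => ?_
    have hN1 : 0 < 1 / N := by positivity
    have hle : 1 / N ≤ N := by rw [div_le_iff₀ (by linarith)]; nlinarith
    rw [Set.uIcc_of_le hle] at hy
    exact (hright y (hN1.trans_le hy.1)).symm
  -- bottom value
  have hB : ∫ a in (0:ℝ)..π, f a = E * (AA μ x + Complex.I * Complex.exp (Complex.I * μ * π) * AA (-μ) (-x)) := by
    have hrefl : IntegrableOn (fun β : ℝ => Complex.exp (Complex.I * μ * (β:ℂ)) * ((1 / √(2 * (x - Real.cos β)) : ℝ) : ℂ)) (Set.Ioo 0 π) ∧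
      ∫ β in Set.Ioo 0 π, Complex.exp (Complex.I * μ * (β:ℂ)) * ((1 / √(2 * (x - Real.cos β)) : ℝ) : ℂ) = Complex.exp (Complex.I * μ * π) * AA (-μ) (-x) := by
      have key : ∀ β : ℝ, Complex.exp (Complex.I * μ * ((π - β : ℝ):ℂ)) * ((1 / √(2 * (x - Real.cos (π - β))) : ℝ) : ℂ) = Complex.exp (Complex.I * μ * π) * (Complex.exp (Complex.I * (-μ) * (β:ℂ)) * ((1 / √(2 * (Real.cos β - (-x))) : ℝ) : ℂ)) := by
        intro β
        rw [Real.cos_pi_sub, show x - -Real.cos β = Real.cos β - -x by ring, ← mul_assoc, ← Complex.exp_add]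
        congr 2; push_cast; ring
      constructor
      · rw [← intervalIntegrable_iff_integrableOn_Ioo_of_le hpi.le]
        have h1 := ((intervalIntegrable_iff_integrableOn_Ioo_of_le hpi.le).mpr (AA_integrable (-μ) (-x) hx')).const_mul (Complex.exp (Complex.I * μ * π))
        simp_rw [← key] at h1
        have := (h1.comp_sub_left π).symm
        simpa using this
      · rw [AA, ← MeasureTheory.integral_const_mul]
        simp_rw [← key, ← integral_Ioc_eq_integral_Ioo]
        rw [← intervalIntegral.integral_of_le hpi.le, ← intervalIntegral.integral_of_le hpi.le,
          intervalIntegral.integral_comp_sub_left (fun β : ℝ => Complex.exp (Complex.I * μ * (β:ℂ)) * ((1 / √(2 * (x - Real.cos β)) : ℝ) : ℂ)) π]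
        simp
    rw [mul_assoc, ← hrefl.2, AA, ← MeasureTheory.integral_const_mul, ← integral_add (AA_integrable μ x hx) (hrefl.1.const_mul _),
      ← MeasureTheory.integral_const_mul, intervalIntegral.integral_of_le hpi.le, integral_Ioc_eq_integral_Ioo]
    refine integral_congr_ae ?_
    have : ∀ᵐ a ∂(volume.restrict (Set.Ioo (0:ℝ) π)), a ≠ Real.arccos x :=
        ae_restrict_of_ae (Measure.ae_ne volume _)
    filter_upwards [this, ae_restrict_mem measurableSet_Ioo] with a ha ha2
    have hca : Real.cos a ≠ x := by
      refine (fun h => ha ?_)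
      rw [← h, Real.arccos_cos ha2.1.le ha2.2.le]
    simp only [hf]
    rcases lt_or_gt_of_ne hca with h | h
    · have h1 : 2 * Complex.cos (a:ℂ) - 2 * (x:ℂ) = ((-(2 * (x - Real.cos a)) : ℝ) : ℂ) := by push_cast; ring
      rw [h1, cpow_half_neg _ (by linarith), Real.sqrt_eq_zero_of_nonpos (show 2 * (Real.cos a - x) ≤ 0 by linarith)]
      simp only [div_zero, Complex.ofReal_zero]
      ring
    · have h1 : 2 * Complex.cos (a:ℂ) - 2 * (x:ℂ) = ((2 * (Real.cos a - x) : ℝ) : ℂ) := by push_cast; ring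
      rw [h1, cpow_half_pos _ (by linarith), Real.sqrt_eq_zero_of_nonpos (show 2 * (x - Real.cos a) ≤ 0 by linarith)]
      simp only [div_zero, Complex.ofReal_zero]
      ring
  have hfin := ((hbot.sub htop).add (hR.const_mul Complex.I)).sub (hL.const_mul Complex.I)
  have hz : Tendsto (fun _ : ℝ => (0:ℂ)) atTop (𝓝 ((∫ a in (0:ℝ)..π, f a) - 0 + Complex.I * ((E * Complex.I * Complex.exp (Complex.I * μ * π)) * MM μ (-x)) - Complex.I * (E * MM μ x))) := by
    refine hfin.congr' ?_
    filter_upwards [eventually_gt_atTop 1] with N hN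
    exact hrect N hN
  have h0 := tendsto_nhds_unique hz tendsto_const_nhds
  rw [hB] at h0
  refine mul_left_cancel₀ hE0 ?_
  rw [mul_zero, ← h0]
  linear_combination (-E * Complex.exp (Complex.I * μ * π) * MM μ (-x)) * Complex.I_sq

lemma legendreP_eq_int (ν : ℂ) (x : ℝ) (hx : x ∈ Set.Ioo (-1:ℝ) 1) :
    legendreP ν x = ((2 / π : ℝ) : ℂ) * ∫ β in Set.Ioo 0 π, Complex.cos ((ν + 1/2) * (β:ℂ)) * ((1 / √(2 * (Real.cos β - x)) : ℝ) : ℂ) := by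
  have hθ : Real.arccos x ∈ Set.Ioo 0 π := ⟨Real.arccos_pos.mpr hx.2, by
    have h1 := Real.arccos_lt_arccos le_rfl hx.1 hx.2.le
    rwa [Real.arccos_neg_one] at h1⟩
  have hcx : Real.cos (Real.arccos x) = x := Real.cos_arccos hx.1.le hx.2.le
  rw [legendreP, if_neg hx.2.ne, intervalIntegral.integral_of_le hθ.1.le]
  congr 1
  rw [setIntegral_eq_of_subset_of_forall_sdiff_eq_zero (s := Set.Ioc 0 (Real.arccos x)) measurableSet_Ioo
    (fun β hβ => ⟨hβ.1, hβ.2.trans_lt hθ.2⟩)]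
  · refine integral_congr_ae (Eventually.of_forall fun β => ?_)
    simp only
    rw [show (2 * ν + 1) * (β:ℂ) / 2 = (ν + 1/2) * (β:ℂ) by ring]
    push_cast; ring
  · intro β hβ
    have h1 : Real.arccos x < β := by
      by_contra h
      exact hβ.2 ⟨hβ.1.1, not_lt.mp h⟩
    have h2 : Real.cos β ≤ x := by
      rw [← hcx]
      exact Real.cos_le_cos_of_nonneg_of_le_pi hθ.1.le hβ.1.2.le h1.le
    rw [Real.sqrt_eq_zero_of_nonpos (by linarith)]
    simp

lemma legendreP_eq_AA (ν : ℂ) (x : ℝ) (hx : x ∈ Set.Ioo (-1:ℝ) 1) :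
    legendreP ν x = ((1 / π : ℝ) : ℂ) * (AA (ν + 1/2) x + AA (-(ν + 1/2)) x) := by
  rw [legendreP_eq_int ν x hx, AA, AA, ← integral_add (AA_integrable _ x hx) (AA_integrable _ x hx),
    ← MeasureTheory.integral_const_mul, ← MeasureTheory.integral_const_mul]
  refine integral_congr_ae (Eventually.of_forall fun β => ?_)
  simp only
  rw [Complex.cos, show Complex.I * (ν + 1/2) * (β:ℂ) = (ν + 1 / 2) * ↑β * Complex.I by ring,
    show Complex.I * -(ν + 1/2) * (β:ℂ) = -((ν + 1 / 2) * ↑β) * Complex.I by ring]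
  push_cast; ring

lemma AA_conj (μ : ℂ) (x : ℝ) : starRingEnd ℂ (AA (starRingEnd ℂ μ) x) = AA (-μ) x := by
  rw [AA, AA, ← integral_conj]
  refine integral_congr_ae (Eventually.of_forall fun β => ?_)
  simp only
  rw [map_mul, Complex.conj_ofReal, ← Complex.exp_conj]
  congr 2
  simp

lemma MM_conj (μ : ℂ) (x : ℝ) : starRingEnd ℂ (MM (starRingEnd ℂ μ) x) = MM μ x := by
  rw [MM, MM, ← integral_conj]
  refine integral_congr_ae (Eventually.of_forall fun β => ?_)
  simp only
  rw [map_mul, Complex.conj_ofReal, ← Complex.exp_conj]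
  congr 2
  simp

lemma strip_conj (μ : ℂ) (hμ : -1/2 < μ.re) (x : ℝ) (hx : x ∈ Set.Ioo (-1:ℝ) 1) :
    AA (-μ) x - Complex.I * Complex.exp (-(Complex.I * μ * π)) * AA μ (-x)
      - Complex.exp (-(Complex.I * μ * π)) * MM μ (-x) + Complex.I * MM μ x = 0 := by
  have h := congrArg (starRingEnd ℂ) (strip (starRingEnd ℂ μ) (by simpa using hμ) x hx)
  have h2 : AA (- (starRingEnd ℂ μ)) (-x) = starRingEnd ℂ (AA μ (-x)) := by
    rw [← AA_conj (starRingEnd ℂ μ), Complex.conj_conj]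
  rw [h2] at h
  simp only [map_sub, map_add, map_mul, map_zero, AA_conj, MM_conj, ← Complex.exp_conj, Complex.conj_conj,
    Complex.conj_I, Complex.conj_ofReal] at h
  rw [show -Complex.I * μ * (π:ℂ) = -(Complex.I * μ * π) by ring] at h
  rw [← h]; ring

lemma sin_ne (ν : ℂ) (hν : ∀ m : ℤ, ν ≠ (m : ℂ)) : Complex.sin (ν * (π:ℂ)) ≠ 0 := by
  intro h
  rw [Complex.sin_eq_zero_iff] at h
  obtain ⟨k, hk⟩ := h
  have : (π:ℂ) ≠ 0 := by exact_mod_cast Real.pi_ne_zero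
  exact hν k (mul_right_cancel₀ this hk)

lemma legendreQ_eq (ν : ℂ) (hν : ∀ m : ℤ, ν ≠ (m : ℂ)) (hre : -1 < ν.re) (x : ℝ) (hx : x ∈ Set.Ioo (-1:ℝ) 1) :
    4 * legendreQ ν x = 2 * (MM (ν + 1/2) x - Complex.I * AA (-(ν+1/2)) x) + 2 * (MM (ν + 1/2) x + Complex.I * AA (ν+1/2) x) := by
  have hx' : -x ∈ Set.Ioo (-1:ℝ) 1 := ⟨by linarith [hx.2], by linarith [hx.1]⟩
  have hμ : -1/2 < (ν + 1/2).re := by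
    simp; linarith
  have h1 := strip (ν + 1/2) hμ x hx
  have h2 := strip_conj (ν + 1/2) hμ x hx
  have hs := sin_ne ν hν
  have hpi : (π:ℂ) ≠ 0 := by exact_mod_cast Real.pi_ne_zero
  have hI : Complex.exp (π / 2 * Complex.I) = Complex.I := Complex.exp_pi_div_two_mul_I
  have hI' : Complex.exp (-(π / 2 * Complex.I)) = -Complex.I := by rw [Complex.exp_neg, hI]; simp
  have e1 : Complex.exp (Complex.I * (ν + 1/2) * π) = Complex.I * Complex.exp (ν * π * Complex.I) := by
    rw [← hI, ← Complex.exp_add, hI]; congr 1; ring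
  have e2 : Complex.exp (-(Complex.I * (ν + 1/2) * π)) = -Complex.I * Complex.exp (-(ν * π) * Complex.I) := by
    rw [← hI', ← Complex.exp_add]; congr 1; ring
  rw [e1] at h1
  rw [e2] at h2
  have e3 : Complex.exp (ν * π * Complex.I) * Complex.exp (-(ν * π) * Complex.I) = 1 := by
    rw [← Complex.exp_add]; simp
  have hsin : Complex.sin (ν * π) = (Complex.exp (-(ν * π) * Complex.I) - Complex.exp (ν * π * Complex.I)) * Complex.I / 2 := rfl
  have hcos : Complex.cos (ν * π) = (Complex.exp (ν * π * Complex.I) + Complex.exp (-(ν * π) * Complex.I)) / 2 := rfl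
  have hI2 := Complex.I_sq
  rw [legendreQ, legendreP_eq_AA ν x hx, legendreP_eq_AA ν (-x) hx']
  rw [div_mul_eq_mul_div, ← mul_div_assoc, div_eq_iff (mul_ne_zero two_ne_zero hs), hsin, hcos]
  push_cast
  generalize Complex.exp (ν * π * Complex.I) = a at *
  generalize Complex.exp (-(ν * π) * Complex.I) = b at *
  generalize AA (ν + 1/2) x = A1 at *
  generalize AA (-(ν + 1/2)) x = A2 at *
  generalize AA (ν + 1/2) (-x) = A3 at *
  generalize AA (-(ν + 1/2)) (-x) = A4 at *
  generalize MM (ν + 1/2) x = M1 at *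
  generalize MM (ν + 1/2) (-x) = M2 at *
  generalize Complex.I = I at *
  have hp : (π:ℂ) * (1 / (π:ℂ)) = 1 := by field_simp
  generalize (1 / (π:ℂ)) = q at *
  linear_combination 4*b*h1+4*a*h2 - 4*(A3+A4)*(a*b*hI2 - e3) - (2*A1-2*A2)*(b-a)*hI2 + (2*(a+b)*(A1+A2) - 4*(A3+A4))*hp

lemma cpow_pos_exp (r : ℝ) (hr : 0 < r) (a : ℂ) : (r:ℂ) ^ a = Complex.exp (a * (Real.log r : ℝ)) := by
  rw [Complex.cpow_def_of_ne_zero (by exact_mod_cast hr.ne'), ← Complex.ofReal_log hr.le, mul_comm]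

noncomputable def KK (ν w : ℂ) (s : ℝ) : ℂ :=
  (s:ℂ) ^ ν * ((1 / √(1 - s) : ℝ) : ℂ) * (1 + w) ^ (-2 * ν - 1) * w⁻¹

lemma E_alg (ν : ℂ) (X c S D : ℝ) (hX : 0 < X) (hc : 0 < c) (hS : 0 < S) (L W : ℂ) (hW : W ≠ 0) :
    ((X * (2 * S * c) / (2 * c ^ 2) ^ 2 : ℝ) : ℂ) *
      (((X / (2 * c ^ 2) : ℝ) : ℂ) ^ ν * ((2 * c / D : ℝ) : ℂ) * Complex.exp ((L - Real.log c) * (-2 * ν - 1)) * (W * ((S / c : ℝ) : ℂ))⁻¹) =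
    (2:ℂ) ^ (-ν) * (X:ℂ) ^ (ν + 1) * (W⁻¹ * Complex.exp (-2 * L * (ν + 1/2)) * ((1 / D : ℝ) : ℂ)) := by
  have hX' : (X:ℂ) ≠ 0 := by exact_mod_cast hX.ne'
  have hc' : (c:ℂ) ≠ 0 := by exact_mod_cast hc.ne'
  have hS' : (S:ℂ) ≠ 0 := by exact_mod_cast hS.ne'
  have h2 : ((2:ℂ)) ^ (-ν) = Complex.exp (-ν * (Real.log 2 : ℝ)) := by
    have := cpow_pos_exp 2 (by norm_num) (-ν)
    exact_mod_cast this
  have h3 : Complex.exp (Real.log c : ℝ) = c := by rw [← Complex.ofReal_exp, Real.exp_log hc]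
  rw [h2, cpow_pos_exp _ (by positivity), Complex.cpow_add _ _ hX', Complex.cpow_one, cpow_pos_exp _ hX,
    Real.log_div hX.ne' (by positivity), Real.log_mul (by norm_num) (by positivity), Real.log_pow]
  have e : Complex.exp (ν * ((Real.log X - (Real.log 2 + (2:ℕ) * Real.log c) : ℝ):ℂ)) * Complex.exp ((L - Real.log c) * (-2 * ν - 1)) =
     Complex.exp (-ν * (Real.log 2 : ℝ)) * Complex.exp (ν * (Real.log X : ℝ)) * Complex.exp (-2 * L * (ν + 1/2)) * c := by
    rw [← h3, ← Complex.exp_add, ← Complex.exp_add, ← Complex.exp_add, ← Complex.exp_add]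
    congr 1
    push_cast; ring
  calc _ = (((X * (2 * S * c) / (2 * c ^ 2) ^ 2 : ℝ) : ℂ) * ((2 * c / D : ℝ) : ℂ) * (W * ((S / c : ℝ) : ℂ))⁻¹) * (Complex.exp (ν * ((Real.log X - (Real.log 2 + (2:ℕ) * Real.log c) : ℝ):ℂ)) * Complex.exp ((L - Real.log c) * (-2 * ν - 1))) := by ring
    _ = _ := by
      rw [e]
      generalize Complex.exp (-ν * (Real.log 2 : ℝ)) = a1
      generalize Complex.exp (ν * (Real.log X : ℝ)) = a2
      generalize Complex.exp (-2 * L * (ν + 1/2)) = a3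
      by_cases hD : D = 0
      · simp [hD]
      have hD' : (D:ℂ) ≠ 0 := by exact_mod_cast hD
      push_cast
      field_simp
      

lemma E1_pt (ν : ℂ) (x : ℝ) (hx : x ∈ Set.Ioo (-1:ℝ) 1) (t : ℝ) (ht : 0 < t) :
    (((1 + x) * Real.sinh t / (1 + Real.cosh t) ^ 2 : ℝ) : ℂ) *
      KK ν ((√(1 - 2 * ((1 + x) / (1 + Real.cosh t)) / (1 + x)) : ℝ) : ℂ) ((1 + x) / (1 + Real.cosh t)) =
    (2:ℂ) ^ (-ν) * ((1 + x : ℝ):ℂ) ^ (ν + 1) * (Complex.exp (-(ν + 1/2) * (t:ℂ)) * ((1 / √(2 * (Real.cosh t - x)) : ℝ) : ℂ)) := by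
  have hX : 0 < 1 + x := by linarith [hx.1]
  set c := Real.cosh (t/2) with hc
  set S := Real.sinh (t/2) with hS
  have hc0 : 0 < c := Real.cosh_pos _
  have hS0 : 0 < S := Real.sinh_pos_iff.mpr (by linarith)
  have hcs : c ^ 2 = S ^ 2 + 1 := Real.cosh_sq _
  have h1 : Real.cosh t = 2 * c ^ 2 - 1 := by
    rw [show t = 2 * (t/2) by ring, Real.cosh_two_mul, ← hc, ← hS]; linarith
  have h2 : Real.sinh t = 2 * S * c := by
    rw [show t = 2 * (t/2) by ring, Real.sinh_two_mul, ← hc, ← hS]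
  have h1' : 1 + Real.cosh t = 2 * c ^ 2 := by linarith
  have hw : √(1 - 2 * ((1 + x) / (1 + Real.cosh t)) / (1 + x)) = S / c := by
    rw [h1', show 1 - 2 * ((1 + x) / (2 * c ^ 2)) / (1 + x) = (S / c) ^ 2 by field_simp; linarith]
    exact Real.sqrt_sq (by positivity)
  have hr : 1 / √(1 - (1 + x) / (1 + Real.cosh t)) = 2 * c / √(2 * (Real.cosh t - x)) := by
    rw [h1', h1, show 1 - (1 + x) / (2 * c ^ 2) = 2 * (2 * c ^ 2 - 1 - x) / (2 * c) ^ 2 by field_simp; ring,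
      Real.sqrt_div' _ (by positivity), Real.sqrt_sq (by positivity), one_div_div]
  have h1w : (1 + ((S / c : ℝ):ℂ)) ^ (-2 * ν - 1) = Complex.exp (((t/2 : ℝ) - Real.log c) * (-2 * ν - 1)) := by
    have : 1 + S / c = Real.exp (t/2) / c := by
      rw [← Real.cosh_add_sinh, ← hc, ← hS]; field_simp
    rw [← Complex.ofReal_one, ← Complex.ofReal_add, this, cpow_pos_exp _ (by positivity),
      Real.log_div (by positivity) hc0.ne', Real.log_exp]
    push_cast; ring_nf
  have := E_alg ν (1 + x) c S (√(2 * (Real.cosh t - x))) hX hc0 hS0 (t/2 : ℝ) 1 one_ne_zero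
  rw [KK, hw, hr, h1w, h1', h2]
  simp only [one_mul, inv_one] at this
  rw [this]
  congr 3
  push_cast; ring

lemma E2_pt (ν : ℂ) (x : ℝ) (hx : x ∈ Set.Ioo (-1:ℝ) 1) (t : ℝ) (ht : t ∈ Set.Ioo 0 π) (e : ℝ) (he : e = 1 ∨ e = -1) :
    (((1 + x) * Real.sin t / (1 + Real.cos t) ^ 2 : ℝ) : ℂ) *
      KK ν (e * Complex.I * ((√(2 * ((1 + x) / (1 + Real.cos t)) / (1 + x) - 1) : ℝ) : ℂ)) ((1 + x) / (1 + Real.cos t)) =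
    (2:ℂ) ^ (-ν) * ((1 + x : ℝ):ℂ) ^ (ν + 1) * (-e * Complex.I * (Complex.exp (Complex.I * (-e * (ν + 1/2)) * (t:ℂ)) * ((1 / √(2 * (Real.cos t - x)) : ℝ) : ℂ))) := by
  have hX : 0 < 1 + x := by linarith [hx.1]
  have hpi := Real.pi_pos
  set c := Real.cos (t/2) with hc
  set S := Real.sin (t/2) with hS
  have hc0 : 0 < c := Real.cos_pos_of_mem_Ioo ⟨by linarith [ht.1], by linarith [ht.2]⟩
  have hS0 : 0 < S := Real.sin_pos_of_pos_of_lt_pi (by linarith [ht.1]) (by linarith [ht.2])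
  have hcs : S ^ 2 + c ^ 2 = 1 := Real.sin_sq_add_cos_sq _
  have h1 : Real.cos t = 2 * c ^ 2 - 1 := by
    rw [show t = 2 * (t/2) by ring, Real.cos_two_mul, ← hc]
  have h2 : Real.sin t = 2 * S * c := by
    rw [show t = 2 * (t/2) by ring, Real.sin_two_mul, ← hc, ← hS]
  have h1' : 1 + Real.cos t = 2 * c ^ 2 := by linarith
  have hw : √(2 * ((1 + x) / (1 + Real.cos t)) / (1 + x) - 1) = S / c := by
    rw [h1', show 2 * ((1 + x) / (2 * c ^ 2)) / (1 + x) - 1 = (S / c) ^ 2 by field_simp; linarith]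
    exact Real.sqrt_sq (by positivity)
  have hr : 1 / √(1 - (1 + x) / (1 + Real.cos t)) = 2 * c / √(2 * (Real.cos t - x)) := by
    rw [h1', h1, show 1 - (1 + x) / (2 * c ^ 2) = 2 * (2 * c ^ 2 - 1 - x) / (2 * c) ^ 2 by field_simp; ring,
      Real.sqrt_div' _ (by positivity), Real.sqrt_sq (by positivity), one_div_div]
  have he0 : (e:ℂ) ≠ 0 := by rcases he with h | h <;> simp [h]
  have hee : ((e:ℂ))⁻¹ = e := by rcases he with h | h <;> simp [h]
  have hexp : Complex.exp (e * Complex.I * (t/2 : ℝ)) = c + e * Complex.I * S := by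
    rw [hc, hS, Complex.ofReal_cos, Complex.ofReal_sin]
    rcases he with h | h
    · rw [h]; simp only [Complex.ofReal_one, one_mul]
      rw [mul_comm Complex.I, Complex.exp_mul_I]; ring
    · rw [h, show ((-1:ℝ):ℂ) * Complex.I * ((t/2:ℝ):ℂ) = (-((t/2:ℝ):ℂ)) * Complex.I by push_cast; ring, Complex.exp_mul_I, Complex.cos_neg, Complex.sin_neg]
      push_cast; ring
  have hc' : (c:ℂ) ≠ 0 := by exact_mod_cast hc0.ne'
  have h1w : (1 + e * Complex.I * ((S / c : ℝ):ℂ)) ^ (-2 * ν - 1) = Complex.exp ((e * Complex.I * (t/2 : ℝ) - Real.log c) * (-2 * ν - 1)) := by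
    have e1 : 1 + e * Complex.I * ((S / c : ℝ):ℂ) = Complex.exp (e * Complex.I * (t/2 : ℝ) - Real.log c) := by
      rw [Complex.exp_sub, hexp, ← Complex.ofReal_exp, Real.exp_log hc0]
      push_cast; field_simp
    rw [e1, Complex.cpow_def_of_ne_zero (Complex.exp_ne_zero _), Complex.log_exp]
    · rcases he with h | h <;> simp [h] <;> linarith [ht.1, ht.2]
    · rcases he with h | h <;> simp [h] <;> linarith [ht.1, ht.2]
  have := E_alg ν (1 + x) c S (√(2 * (Real.cos t - x))) hX hc0 hS0 (e * Complex.I * (t/2 : ℝ)) (e * Complex.I) (mul_ne_zero he0 Complex.I_ne_zero)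
  rw [KK, hw, hr, h1w, h1', h2, this, mul_inv, hee, Complex.inv_I]
  rw [show -2 * (↑e * Complex.I * ↑(t / 2)) * (ν + 1 / 2) = Complex.I * (-e * (ν + 1/2)) * (t:ℂ) by push_cast; ring]
  ring

lemma E1 (ν : ℂ) (x : ℝ) (hx : x ∈ Set.Ioo (-1:ℝ) 1) :
    ∫ s in Set.Ioo 0 ((1 + x)/2), KK ν ((√(1 - 2 * s / (1 + x)) : ℝ) : ℂ) s =
      (2:ℂ) ^ (-ν) * ((1 + x : ℝ):ℂ) ^ (ν + 1) * MM (ν + 1/2) x := by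
  have hX : 0 < 1 + x := by linarith [hx.1]
  have him : (fun t => (1 + x) / (1 + Real.cosh t)) '' Set.Ioi 0 = Set.Ioo 0 ((1 + x)/2) := by
    ext s
    constructor
    · rintro ⟨t, ht, rfl⟩
      have := Real.one_lt_cosh.mpr (ne_of_gt ht)
      refine ⟨by positivity, ?_⟩
      exact div_lt_div_of_pos_left hX (by norm_num) (by linarith)
    · intro hs
      have h1 : 1 < (1 + x) / s - 1 := by
        have : 2 < (1 + x) / s := by rw [lt_div_iff₀ hs.1]; linarith [hs.2]
        linarith
      refine ⟨Real.arcosh ((1 + x) / s - 1), Real.arcosh_pos h1, ?_⟩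
      have hs0 := hs.1
      simp only
      rw [Real.cosh_arcosh h1.le]
      rw [add_sub_cancel, div_div_cancel₀ hX.ne']
  have hpos : ∀ t : ℝ, 0 < 1 + Real.cosh t := fun t => by have := Real.cosh_pos t; linarith
  rw [← him, integral_image_eq_integral_abs_deriv_smul (f' := fun t => -((1 + x) * Real.sinh t / (1 + Real.cosh t) ^ 2)) measurableSet_Ioi, MM,
    ← MeasureTheory.integral_const_mul]
  · refine setIntegral_congr_fun measurableSet_Ioi fun t ht => ?_
    rw [← E1_pt ν x hx t ht, abs_neg, abs_of_nonneg, Complex.real_smul]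
    have := Real.sinh_pos_iff.mpr ht
    positivity
  · intro t ht
    refine HasDerivAt.hasDerivWithinAt ?_
    have h1 := ((Real.hasDerivAt_cosh t).const_add 1).inv (hpos t).ne'
    have := h1.const_mul (1 + x)
    refine this.congr_deriv ?_
    ring
  · intro t ht u hu h
    simp only at h
    have h1 := hpos t
    have h2 := hpos u
    rw [div_eq_div_iff h1.ne' h2.ne'] at h
    have h3 := mul_left_cancel₀ hX.ne' h
    exact Real.cosh_injOn (Set.mem_Ici.mpr (le_of_lt ht)) (Set.mem_Ici.mpr (le_of_lt hu)) (by linarith)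

lemma E2 (ν : ℂ) (x : ℝ) (hx : x ∈ Set.Ioo (-1:ℝ) 1) (e : ℝ) (he : e = 1 ∨ e = -1) :
    ∫ s in Set.Ioo ((1 + x)/2) 1, KK ν (e * Complex.I * ((√(2 * s / (1 + x) - 1) : ℝ) : ℂ)) s =
      (2:ℂ) ^ (-ν) * ((1 + x : ℝ):ℂ) ^ (ν + 1) * (-e * Complex.I * AA (-e * (ν + 1/2)) x) := by
  have hX : 0 < 1 + x := by linarith [hx.1]
  have hθ : Real.arccos x ∈ Set.Ioo 0 π := ⟨Real.arccos_pos.mpr hx.2, by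
    have h1 := Real.arccos_lt_arccos le_rfl hx.1 hx.2.le
    rwa [Real.arccos_neg_one] at h1⟩
  have hcx : Real.cos (Real.arccos x) = x := Real.cos_arccos hx.1.le hx.2.le
  have hAA : AA (-e * (ν + 1/2)) x = ∫ t in Set.Ioo 0 (Real.arccos x), (Complex.exp (Complex.I * (-e * (ν + 1/2)) * (t:ℂ)) * ((1 / √(2 * (Real.cos t - x)) : ℝ) : ℂ)) := by
    rw [AA]
    refine setIntegral_eq_of_subset_of_forall_sdiff_eq_zero (s := Set.Ioo 0 (Real.arccos x)) measurableSet_Ioo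
      (fun β hβ => ⟨hβ.1, hβ.2.trans hθ.2⟩) ?_
    intro β hβ
    have h1 : Real.arccos x ≤ β := by
      by_contra h
      exact hβ.2 ⟨hβ.1.1, not_le.mp h⟩
    have h2 : Real.cos β ≤ x := by
      rw [← hcx]
      exact Real.cos_le_cos_of_nonneg_of_le_pi hθ.1.le hβ.1.2.le h1
    rw [Real.sqrt_eq_zero_of_nonpos (by linarith)]
    simp
  have hcos : ∀ t ∈ Set.Ioo 0 (Real.arccos x), x < Real.cos t ∧ Real.cos t < 1 := by
    intro t ht
    constructor
    · rw [← hcx]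
      exact Real.cos_lt_cos_of_nonneg_of_le_pi ht.1.le hθ.2.le ht.2
    · rw [← Real.cos_zero]
      exact Real.cos_lt_cos_of_nonneg_of_le_pi le_rfl (ht.2.trans hθ.2).le ht.1
  have him : (fun t => (1 + x) / (1 + Real.cos t)) '' Set.Ioo 0 (Real.arccos x) = Set.Ioo ((1 + x)/2) 1 := by
    ext s
    constructor
    · rintro ⟨t, ht, rfl⟩
      have h1 := hcos t ht
      refine ⟨?_, ?_⟩
      · exact div_lt_div_of_pos_left hX (by linarith) (by linarith)
      · simp only
        rw [div_lt_one (by linarith)]; linarith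
    · intro hs
      have hs0 : 0 < s := by linarith [hs.1]
      have h1 : (1 + x) / s - 1 < 1 := by
        have : (1 + x) / s < 2 := by rw [div_lt_iff₀ hs0]; linarith [hs.1]
        linarith
      have h2 : x < (1 + x) / s - 1 := by
        have : 1 + x < (1 + x) / s := by rw [lt_div_iff₀ hs0]; nlinarith [hs.2]
        linarith
      refine ⟨Real.arccos ((1 + x) / s - 1), ⟨Real.arccos_pos.mpr h1, Real.arccos_lt_arccos hx.1.le h2 h1.le⟩, ?_⟩
      simp only
      rw [Real.cos_arccos (by linarith [hx.1]) h1.le]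
      rw [add_sub_cancel, div_div_cancel₀ hX.ne']
  have hpos : ∀ t ∈ Set.Ioo 0 (Real.arccos x), 0 < 1 + Real.cos t := fun t ht => by have := hcos t ht; linarith
  rw [← him, integral_image_eq_integral_abs_deriv_smul (f' := fun t => ((1 + x) * Real.sin t / (1 + Real.cos t) ^ 2)) measurableSet_Ioo, hAA,
    ← MeasureTheory.integral_const_mul, ← MeasureTheory.integral_const_mul]
  · refine setIntegral_congr_fun measurableSet_Ioo fun t ht => ?_
    have ht2 : t ∈ Set.Ioo 0 π := ⟨ht.1, ht.2.trans hθ.2⟩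
    rw [← E2_pt ν x hx t ht2 e he, abs_of_nonneg, Complex.real_smul]
    have := Real.sin_pos_of_pos_of_lt_pi ht2.1 ht2.2
    positivity
  · intro t ht
    refine HasDerivAt.hasDerivWithinAt ?_
    have h1 := ((Real.hasDerivAt_cos t).const_add 1).inv (hpos t ht).ne'
    have := h1.const_mul (1 + x)
    refine this.congr_deriv ?_
    ring
  · intro t ht u hu h
    simp only at h
    have h1 := hpos t ht
    have h2 := hpos u hu
    rw [div_eq_div_iff h1.ne' h2.ne'] at h
    have h3 := mul_left_cancel₀ hX.ne' h
    exact Real.injOn_cos ⟨ht.1.le, (ht.2.trans hθ.2).le⟩ ⟨hu.1.le, (hu.2.trans hθ.2).le⟩ (by linarith)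

lemma KK_bound (ν w : ℂ) (s B : ℝ) (hs : s ∈ Set.Ioo (0:ℝ) 1) (hw : 0 ≤ w.re) (hB : ‖w‖ ≤ B) :
    ‖KK ν w s‖ ≤ ((1 + B) ^ |(-2 * ν - 1).re| * Real.exp (π * |(-2 * ν - 1).im|)) * (s ^ ν.re * (1 / √(1 - s)) * ‖w‖⁻¹) := by
  have hB0 : 0 ≤ B := (norm_nonneg _).trans hB
  have h1 : 1 ≤ ‖1 + w‖ := by
    refine le_trans ?_ (Complex.re_le_norm _)
    simp [hw]
  have h2 : ‖1 + w‖ ≤ 1 + B := (norm_add_le _ _).trans (by simpa using hB)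
  have h3 : ‖(1 + w) ^ (-2 * ν - 1)‖ ≤ (1 + B) ^ |(-2 * ν - 1).re| * Real.exp (π * |(-2 * ν - 1).im|) := by
    refine (Complex.norm_cpow_le _ _).trans ?_
    rw [div_eq_mul_inv, ← Real.exp_neg]
    refine mul_le_mul ?_ ?_ (Real.exp_pos _).le (by positivity)
    · calc _ ≤ ‖1 + w‖ ^ |(-2 * ν - 1).re| := Real.rpow_le_rpow_of_exponent_le h1 (le_abs_self _)
        _ ≤ _ := Real.rpow_le_rpow (by positivity) h2 (abs_nonneg _)
    · refine Real.exp_le_exp.mpr ?_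
      refine (neg_le_abs _).trans ?_
      rw [abs_mul]
      exact mul_le_mul_of_nonneg_right (Complex.abs_arg_le_pi _) (abs_nonneg _)
  rw [KK, norm_mul, norm_mul, norm_mul, Complex.norm_cpow_eq_rpow_re_of_pos hs.1, Complex.norm_real, norm_inv,
    Real.norm_of_nonneg (by positivity)]
  have hs0 := hs.1
  calc _ ≤ s ^ ν.re * (1 / √(1 - s)) * ((1 + B) ^ |(-2 * ν - 1).re| * Real.exp (π * |(-2 * ν - 1).im|)) * ‖w‖⁻¹ := by gcongr
    _ = _ := by ring

noncomputable def WW (z : ℂ) (s : ℝ) : ℂ := (1 - 2 * (s:ℂ) / (1 + z)) ^ (2⁻¹ : ℂ)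

noncomputable def JJ (ν z : ℂ) : ℂ := ∫ s in Set.Ioo (0:ℝ) 1, KK ν (WW z s) s

lemma sqrt_norm (u : ℂ) : ‖u ^ (2⁻¹ : ℂ)‖ = √‖u‖ := by
  have h : (u ^ (2⁻¹ : ℂ)) ^ 2 = u := by
    have := Complex.cpow_nat_inv_pow u (n := 2) (by norm_num)
    exact_mod_cast this
  rw [← Real.sqrt_sq (norm_nonneg (u ^ (2⁻¹ : ℂ))), ← norm_pow, h]

lemma int_three (a s0 : ℝ) (ha : -1 < a) (hs0 : s0 ∈ Set.Ioo (0:ℝ) 1) :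
    IntegrableOn (fun s : ℝ => |s - 0| ^ a * |s - 1| ^ (-1/2 : ℝ) * |s - s0| ^ (-1/2 : ℝ)) (Set.Ioo 0 1) := by
  rw [← intervalIntegrable_iff_integrableOn_Ioo_of_le zero_le_one]
  have h0 := hs0.1
  have h1 := hs0.2
  have hc : ∀ c r p q : ℝ, (∀ s ∈ Set.uIcc p q, s - c ≠ 0) → ContinuousOn (fun s : ℝ => |s - c| ^ r) (Set.uIcc p q) := by
    intro c r p q h
    refine ContinuousOn.rpow_const (by fun_prop) ?_
    intro s hs
    left
    exact abs_ne_zero.mpr (h s hs)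
  have i1 : IntervalIntegrable (fun s : ℝ => |s - 0| ^ a * |s - 1| ^ (-1/2 : ℝ) * |s - s0| ^ (-1/2 : ℝ)) volume 0 (s0/2) := by
    have := (ii_abs_rpow 0 0 (s0/2) a ha).mul_continuousOn
      ((hc 1 (-1/2) 0 (s0/2) ?_).mul (hc s0 (-1/2) 0 (s0/2) ?_))
    · refine this.congr fun s _ => ?_
      simp only [Pi.mul_apply]
      ring
    all_goals
      intro s hs
      rw [Set.uIcc_of_le (by linarith)] at hs
      have := hs.2
      intro h; linarith
  have i2 : IntervalIntegrable (fun s : ℝ => |s - 0| ^ a * |s - 1| ^ (-1/2 : ℝ) * |s - s0| ^ (-1/2 : ℝ)) volume (s0/2) ((s0+1)/2) := by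
    have := (ii_abs_rpow s0 (s0/2) ((s0+1)/2) (-1/2) (by norm_num)).mul_continuousOn
      ((hc 1 (-1/2) (s0/2) ((s0+1)/2) ?_).mul (hc 0 a (s0/2) ((s0+1)/2) ?_))
    · refine this.congr fun s _ => ?_
      simp only [Pi.mul_apply]
      ring
    all_goals
      intro s hs
      rw [Set.uIcc_of_le (by linarith)] at hs
      have := hs.2
      have := hs.1
      intro h; linarith
  have i3 : IntervalIntegrable (fun s : ℝ => |s - 0| ^ a * |s - 1| ^ (-1/2 : ℝ) * |s - s0| ^ (-1/2 : ℝ)) volume ((s0+1)/2) 1 := by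
    have := (ii_abs_rpow 1 ((s0+1)/2) 1 (-1/2) (by norm_num)).mul_continuousOn
      ((hc s0 (-1/2) ((s0+1)/2) 1 ?_).mul (hc 0 a ((s0+1)/2) 1 ?_))
    · refine this.congr fun s _ => ?_
      simp only [Pi.mul_apply]
      ring
    all_goals
      intro s hs
      rw [Set.uIcc_of_le (by linarith)] at hs
      have := hs.2
      have := hs.1
      intro h; linarith
  exact (i1.trans i2).trans i3

/-- limiting square root -/
noncomputable def W0 (e x s : ℝ) : ℂ :=
  ((√((|1 - 2 * s / (1 + x)| + (1 - 2 * s / (1 + x))) / 2) : ℝ) : ℂ)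
    + e * Complex.I * ((√((|1 - 2 * s / (1 + x)| - (1 - 2 * s / (1 + x))) / 2) : ℝ) : ℂ)

lemma W0_lt (e x s : ℝ) (h : 0 ≤ 1 - 2 * s / (1 + x)) : W0 e x s = ((√(1 - 2 * s / (1 + x)) : ℝ) : ℂ) := by
  rw [W0, abs_of_nonneg h]; simp

lemma W0_gt (e x s : ℝ) (h : 1 - 2 * s / (1 + x) ≤ 0) : W0 e x s = e * Complex.I * ((√(2 * s / (1 + x) - 1) : ℝ) : ℂ) := by
  rw [W0, abs_of_nonpos h, show (-(1 - 2 * s / (1 + x)) + (1 - 2 * s / (1 + x))) / 2 = 0 by ring,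
    show (-(1 - 2 * s / (1 + x)) - (1 - 2 * s / (1 + x))) / 2 = 2 * s / (1 + x) - 1 by ring]
  simp

lemma WW_tendsto (e x s : ℝ) (hs : 0 < s) (he : e = 1 ∨ e = -1) (hx : x ∈ Set.Ioo (-1:ℝ) 1) :
    Tendsto (fun δ : ℝ => WW ((x:ℂ) + e * δ * Complex.I) s) (𝓝[>] 0) (𝓝 (W0 e x s)) := by
  have hX : 0 < 1 + x := by linarith [hx.1]
  have hX' : (1 + (x:ℂ)) ≠ 0 := by exact_mod_cast hX.ne'
  set u : ℝ → ℂ := fun δ => 1 - 2 * (s:ℂ) / (1 + ((x:ℂ) + e * δ * Complex.I)) with hu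
  have hu0 : Tendsto u (𝓝[>] 0) (𝓝 ((1 - 2 * s / (1 + x) : ℝ) : ℂ)) := by
    have h1 : ContinuousAt u 0 := by
      refine ContinuousAt.sub (by fun_prop) (ContinuousAt.div (by fun_prop) (by fun_prop) ?_)
      simpa using hX'
    have h2 := h1.tendsto.mono_left (nhdsWithin_le_nhds (s := Set.Ioi (0:ℝ)))
    have h3 : u 0 = ((1 - 2 * s / (1 + x) : ℝ) : ℂ) := by simp [hu]
    rwa [h3] at h2
  have him : ∀ δ : ℝ, (u δ).im = 2 * s * (e * δ) / Complex.normSq (1 + ((x:ℂ) + e * δ * Complex.I)) := by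
    intro δ
    have : 2 * (s:ℂ) = ((2 * s : ℝ) : ℂ) := by push_cast; rfl
    simp only [hu]
    rw [this, div_eq_mul_inv, Complex.sub_im, Complex.im_ofReal_mul, Complex.inv_im]
    simp
    ring
  have hev : (fun δ : ℝ => WW ((x:ℂ) + e * δ * Complex.I) s) =ᶠ[𝓝[>] 0] fun δ =>
     ((√((‖u δ‖ + (u δ).re) / 2) : ℝ) : ℂ) + e * Complex.I * ((√((‖u δ‖ - (u δ).re) / 2) : ℝ) : ℂ) := by
    filter_upwards [self_mem_nhdsWithin] with δ hδ
    have hδ : 0 < δ := hδ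
    have hn : 0 < Complex.normSq (1 + ((x:ℂ) + e * δ * Complex.I)) := by
      rw [Complex.normSq_pos]
      intro h
      have := congrArg Complex.re h
      simp at this
      linarith
    rw [WW]
    change (u δ) ^ (2⁻¹ : ℂ) = _
    have hi := him δ
    apply Complex.ext
    · rw [Complex.cpow_inv_two_re]
      simp
    · rcases he with h | h
      · rw [Complex.cpow_inv_two_im_eq_sqrt]
        · simp [h]
        · rw [hi]
          have he1 : 0 < e := by rw [h]; norm_num
          positivity
      · rw [Complex.cpow_inv_two_im_eq_neg_sqrt]
        · simp [h]
        · rw [hi, h]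
          have : 0 < 2 * s * δ / Complex.normSq (1 + ((x:ℂ) + ((-1:ℝ):ℂ) * δ * Complex.I)) := by rw [h] at hn; positivity
          have e2 : 2 * s * (-1 * δ) / Complex.normSq (1 + ((x:ℂ) + ((-1:ℝ):ℂ) * δ * Complex.I)) = -(2 * s * δ / Complex.normSq (1 + ((x:ℂ) + ((-1:ℝ):ℂ) * δ * Complex.I))) := by ring
          rw [e2]; linarith
  refine Tendsto.congr' hev.symm ?_
  have hc : Continuous (fun v : ℂ => ((√((‖v‖ + v.re) / 2) : ℝ) : ℂ) + e * Complex.I * ((√((‖v‖ - v.re) / 2) : ℝ) : ℂ)) := by fun_prop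
  have := (hc.tendsto _).comp hu0
  rw [Complex.norm_real, Complex.ofReal_re, Real.norm_eq_abs] at this
  exact this

lemma W0_re (e x s : ℝ) : 0 ≤ (W0 e x s).re := by
  simp [W0]
  positivity

lemma W0_norm (e x s : ℝ) (he : e = 1 ∨ e = -1) : ‖W0 e x s‖ = √|1 - 2 * s / (1 + x)| := by
  rcases le_total 0 (1 - 2 * s / (1 + x)) with h | h
  · rw [W0_lt _ _ _ h, Complex.norm_real, Real.norm_of_nonneg (Real.sqrt_nonneg _), abs_of_nonneg h]
  · rw [W0_gt _ _ _ h, norm_mul, norm_mul, Complex.norm_I, Complex.norm_real, Complex.norm_real, 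
      Real.norm_of_nonneg (Real.sqrt_nonneg _), abs_of_nonpos h]
    rcases he with h | h <;> simp [h]

lemma KK_cont (ν w : ℂ) (s : ℝ) (hw : 0 ≤ w.re) (hw0 : w ≠ 0) : ContinuousAt (fun w => KK ν w s) w := by
  unfold KK
  refine ContinuousAt.mul (ContinuousAt.mul (by fun_prop) ?_) (continuousAt_id.inv₀ hw0)
  refine ContinuousAt.cpow (by fun_prop) (by fun_prop) ?_
  left
  simp; linarith

lemma JJ_tendsto (ν : ℂ) (hre : -1 < ν.re) (x : ℝ) (hx : x ∈ Set.Ioo (-1:ℝ) 1) (e : ℝ) (he : e = 1 ∨ e = -1) :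
    Tendsto (fun δ : ℝ => JJ ν ((x:ℂ) + e * δ * Complex.I)) (𝓝[>] 0)
      (𝓝 ((2:ℂ) ^ (-ν) * ((1 + x : ℝ):ℂ) ^ (ν + 1) * (MM (ν + 1/2) x + -e * Complex.I * AA (-e * (ν + 1/2)) x))) := by
  have hX : 0 < 1 + x := by linarith [hx.1]
  set s0 := (1 + x) / 2 with hs0
  have hs0m : s0 ∈ Set.Ioo (0:ℝ) 1 := ⟨by positivity, by linarith [hx.2]⟩
  set B := √(1 + 2 / (1 + x)) with hB
  set K := ((1 + B) ^ |(-2 * ν - 1).re| * Real.exp (π * |(-2 * ν - 1).im|)) with hK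
  have hK0 : 0 ≤ K := by positivity
  have hg := (int_three ν.re s0 hre hs0m).const_mul (K * (2/3 : ℝ) ^ (-1/2 : ℝ))
  have hbound : ∀ s : ℝ, ∀ w : ℂ, s ∈ Set.Ioo (0:ℝ) 1 → s ≠ s0 → 0 ≤ w.re → ‖w‖ ≤ B → √(2/3 * |s - s0|) ≤ ‖w‖ →
      ‖KK ν w s‖ ≤ K * (2/3 : ℝ) ^ (-1/2 : ℝ) * (|s - 0| ^ ν.re * |s - 1| ^ (-1/2 : ℝ) * |s - s0| ^ (-1/2 : ℝ)) := by
    intro s w hs hss hw1 hw2 hw3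
    refine (KK_bound ν w s B hs hw1 hw2).trans ?_
    have hd : 0 < |s - s0| := abs_pos.mpr (sub_ne_zero.mpr hss)
    have h1 : ‖w‖⁻¹ ≤ (2/3 : ℝ) ^ (-1/2 : ℝ) * |s - s0| ^ (-1/2 : ℝ) := by
      rw [← Real.mul_rpow (by norm_num) hd.le]
      refine (inv_anti₀ (by positivity) hw3).trans (le_of_eq ?_)
      rw [Real.sqrt_eq_rpow, ← Real.rpow_neg (by positivity)]; norm_num
    have h2 : 1 / √(1 - s) = |s - 1| ^ (-1/2 : ℝ) := by
      have : 0 < 1 - s := by linarith [hs.2]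
      rw [abs_sub_comm, abs_of_pos this, Real.sqrt_eq_rpow, one_div, ← Real.rpow_neg (by positivity)]; norm_num
    have hs1 := hs.1
    rw [h2, sub_zero, abs_of_pos hs1]
    calc _ ≤ K * (s ^ ν.re * |s - 1| ^ (-1/2 : ℝ) * ((2/3 : ℝ) ^ (-1/2 : ℝ) * |s - s0| ^ (-1/2 : ℝ))) := by gcongr
      _ = _ := by ring
  have hs0' : ∀ s : ℝ, 1 - 2 * s / (1 + x) = 2 / (1 + x) * (s0 - s) := by
    intro s; rw [hs0]; field_simp
  have hW0n : ∀ s ∈ Set.Ioo (0:ℝ) 1, √(2/3 * |s - s0|) ≤ ‖W0 e x s‖ ∧ ‖W0 e x s‖ ≤ B := by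
    intro s hs
    rw [W0_norm e x s he, hs0', abs_mul, abs_sub_comm s0 s, abs_of_pos (by positivity : 0 < 2 / (1 + x))]
    constructor
    · refine Real.sqrt_le_sqrt ?_
      gcongr
      linarith [hx.2]
    · refine Real.sqrt_le_sqrt ?_
      have : |s - s0| ≤ 1 := by rw [abs_le]; constructor <;> linarith [hs.1, hs.2, hs0m.1, hs0m.2]
      have h2 : 2 / (1 + x) * |s - s0| ≤ 2 / (1 + x) * 1 := by gcongr
      linarith
  have hne : ∀ᵐ s ∂(volume.restrict (Set.Ioo (0:ℝ) 1)), s ≠ s0 := ae_restrict_of_ae (Measure.ae_ne volume _)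
  have h_int : IntegrableOn (fun s => KK ν (W0 e x s) s) (Set.Ioo 0 1) := by
    refine Integrable.mono' hg ?_ ?_
    · refine Measurable.aestronglyMeasurable ?_
      unfold KK W0
      fun_prop
    · filter_upwards [hne, ae_restrict_mem measurableSet_Ioo] with s h1 h2
      exact hbound s _ h2 h1 (W0_re _ _ _) (hW0n s h2).2 (hW0n s h2).1
  have hval : ∫ s in Set.Ioo (0:ℝ) 1, KK ν (W0 e x s) s = ((2:ℂ) ^ (-ν) * ((1 + x : ℝ):ℂ) ^ (ν + 1) * (MM (ν + 1/2) x + -e * Complex.I * AA (-e * (ν + 1/2)) x)) := by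
    rw [mul_add, ← E1 ν x hx, ← E2 ν x hx e he]
    rw [← intervalIntegrable_iff_integrableOn_Ioo_of_le zero_le_one] at h_int
    rw [← integral_Ioc_eq_integral_Ioo, ← intervalIntegral.integral_of_le zero_le_one,
      ← intervalIntegral.integral_add_adjacent_intervals (b := s0)
        (h_int.mono_set (by rw [Set.uIcc_of_le hs0m.1.le, Set.uIcc_of_le zero_le_one]; exact Set.Icc_subset_Icc le_rfl hs0m.2.le))
        (h_int.mono_set (by rw [Set.uIcc_of_le hs0m.2.le, Set.uIcc_of_le zero_le_one]; exact Set.Icc_subset_Icc hs0m.1.le le_rfl)),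
      intervalIntegral.integral_of_le hs0m.1.le, intervalIntegral.integral_of_le hs0m.2.le,
      integral_Ioc_eq_integral_Ioo, integral_Ioc_eq_integral_Ioo]
    congr 1
    · refine setIntegral_congr_fun measurableSet_Ioo fun s hs => ?_
      rw [W0_lt]
      rw [hs0']
      exact mul_nonneg (by positivity) (by linarith [hs.2])
    · refine setIntegral_congr_fun measurableSet_Ioo fun s hs => ?_
      rw [W0_gt]
      rw [hs0']
      exact mul_nonpos_of_nonneg_of_nonpos (by positivity) (by linarith [hs.1])
  rw [← hval]
  unfold JJ
  refine tendsto_integral_filter_of_dominated_convergence _ ?_ ?_ hg ?_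
  · refine Eventually.of_forall fun δ => Measurable.aestronglyMeasurable ?_
    unfold KK WW
    fun_prop
  · have h1 : ∀ᶠ δ : ℝ in 𝓝[>] 0, δ < 1 := (eventually_lt_nhds (by norm_num : (0:ℝ) < 1)).filter_mono nhdsWithin_le_nhds
    filter_upwards [h1, self_mem_nhdsWithin] with δ hδ1 hδ0
    have hδ0 : 0 < δ := hδ0
    filter_upwards [hne, ae_restrict_mem measurableSet_Ioo] with s h1 h2
    have hz1 : 1 + x ≤ ‖1 + ((x:ℂ) + e * δ * Complex.I)‖ := by
      refine le_trans ?_ (Complex.re_le_norm _)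
      simp
    have hz0 : 1 + ((x:ℂ) + e * δ * Complex.I) ≠ 0 := by
      rw [← norm_pos_iff]; linarith
    have hz2 : ‖1 + ((x:ℂ) + e * δ * Complex.I)‖ ≤ 3 := by
      have : ‖(e:ℂ) * δ * Complex.I‖ = δ := by
        rw [norm_mul, norm_mul, Complex.norm_I, Complex.norm_real, Complex.norm_real, Real.norm_of_nonneg hδ0.le]
        rcases he with h | h <;> simp [h]
      have h3 : ‖1 + (x:ℂ)‖ = 1 + x := by
        rw [← Complex.ofReal_one, ← Complex.ofReal_add, Complex.norm_real, Real.norm_of_nonneg hX.le]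
      rw [← add_assoc]
      refine (norm_add_le _ _).trans ?_
      rw [h3, this]
      linarith [hx.2]
    have hwn : ‖WW ((x:ℂ) + e * δ * Complex.I) s‖ = √‖1 - 2 * (s:ℂ) / (1 + ((x:ℂ) + e * δ * Complex.I))‖ := sqrt_norm _
    refine hbound s _ h2 h1 ?_ ?_ ?_
    · rw [WW, Complex.cpow_inv_two_re]; exact Real.sqrt_nonneg _
    · rw [hwn]
      refine Real.sqrt_le_sqrt ?_
      refine (norm_sub_le _ _).trans ?_
      rw [norm_div, norm_mul, Complex.norm_real, Real.norm_of_nonneg h2.1.le]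
      simp only [norm_one, Complex.norm_ofNat]
      have h5 := h2.2
      gcongr
      linarith
    · rw [hwn]
      refine Real.sqrt_le_sqrt ?_
      have h6 : 1 - 2 * (s:ℂ) / (1 + ((x:ℂ) + e * δ * Complex.I)) = (1 + ((x:ℂ) + e * δ * Complex.I) - 2 * s) / (1 + ((x:ℂ) + e * δ * Complex.I)) := by
        field_simp
      have h7 : 2 * |s - s0| ≤ ‖1 + ((x:ℂ) + e * δ * Complex.I) - 2 * s‖ := by
        refine le_trans (le_of_eq ?_) (Complex.abs_re_le_norm _)
        have : (1 + ((x:ℂ) + e * δ * Complex.I) - 2 * s).re = 2 * (s0 - s) := by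
          simp [hs0]; ring
        rw [this, abs_mul, abs_sub_comm]; norm_num
      rw [h6, norm_div, le_div_iff₀ (by linarith)]
      nlinarith [abs_nonneg (s - s0)]
  · filter_upwards [hne, ae_restrict_mem measurableSet_Ioo] with s h1 h2
    refine (KK_cont ν (W0 e x s) s (W0_re _ _ _) ?_).tendsto.comp (WW_tendsto e x s h2.1 he hx)
    rw [← norm_pos_iff]
    refine lt_of_lt_of_le ?_ (hW0n s h2).1
    have hd : 0 < |s - s0| := abs_pos.mpr (sub_ne_zero.mpr h1)
    positivity

lemma circ_lower (r θ : ℝ) (hr : r ∈ Set.Icc (0:ℝ) 1) (hθ : θ ∈ Set.Icc 0 (2 * π)) :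
    |θ - π| / π ≤ ‖1 + circleMap 0 r θ‖ := by
  have hpi := Real.pi_pos
  have h1 : |θ - π| / π ≤ |Real.cos (θ / 2)| := by
    have h2 : Real.cos (θ/2) = Real.sin ((π - θ) / 2) := by
      rw [← Real.cos_pi_div_two_sub]; congr 1; ring
    have h3 : |(π - θ) / 2| ≤ π / 2 := by
      rw [abs_le]; constructor <;> linarith [hθ.1, hθ.2]
    have h4 := Real.mul_abs_le_abs_sin h3
    rw [h2]
    refine le_trans (le_of_eq ?_) h4
    rw [abs_div, abs_sub_comm]; norm_num
  refine h1.trans ?_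
  refine le_of_sq_le_sq ?_ (norm_nonneg _)
  have e : 1 + circleMap 0 r θ = ((1 + r * Real.cos θ : ℝ) : ℂ) + ((r * Real.sin θ : ℝ) : ℂ) * Complex.I := by
    rw [circleMap, Complex.exp_mul_I]; push_cast; ring
  rw [e, ← Complex.normSq_eq_norm_sq, Complex.normSq_add_mul_I, sq_abs]
  have h5 : Real.cos θ = 2 * Real.cos (θ/2) ^ 2 - 1 := by
    rw [← Real.cos_two_mul]; congr 1; ring
  have h6 := Real.sin_sq_add_cos_sq θ
  have h7 : Real.cos (θ/2) ^ 2 ≤ 1 := Real.cos_sq_le_one _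
  have h8 := sq_nonneg (Real.cos (θ/2))
  have e2 : (1 + r * Real.cos θ) ^ 2 + (r * Real.sin θ) ^ 2 = (1 - r) ^ 2 + 4 * r * Real.cos (θ/2) ^ 2 := by
    rw [mul_pow r (Real.sin θ), show Real.sin θ ^ 2 = 1 - Real.cos θ ^ 2 by linarith, h5]; ring
  rw [e2]
  nlinarith [mul_nonneg (sq_nonneg (1 - r)) (sub_nonneg.mpr h7), mul_nonneg hr.1 h8, mul_nonneg (mul_nonneg hr.1 hr.1) h8]

lemma circ1 (a : ℂ) (ha : -1 < a.re) (n : ℕ) (q0 : ℂ) (hq0 : ‖q0‖ < 1) :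
    IntervalIntegrable (fun θ : ℝ => circleMap 0 1 θ / (circleMap 0 1 θ - q0) * ((1 + circleMap 0 1 θ) ^ a * (circleMap 0 1 θ) ^ n / (1 - q0 * circleMap 0 1 θ))) volume 0 (2 * π) ∧
    ∫ θ in (0:ℝ)..(2 * π), circleMap 0 1 θ / (circleMap 0 1 θ - q0) * ((1 + circleMap 0 1 θ) ^ a * (circleMap 0 1 θ) ^ n / (1 - q0 * circleMap 0 1 θ)) =
      2 * π * ((1 + q0) ^ a * q0 ^ n / (1 - q0 * q0)) := by
  have hpi := Real.pi_pos
  set G : ℂ → ℂ := fun q => (1 + q) ^ a * q ^ n / (1 - q0 * q) with hG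
  set d := 1 - ‖q0‖ with hd
  have hd0 : 0 < d := by linarith
  have hn0 : 0 ≤ ‖q0‖ := norm_nonneg _
  have hslit : ∀ q : ℂ, ‖q‖ < 1 → 1 + q ∈ Complex.slitPlane := by
    intro q hq
    left
    have := (abs_lt.mp ((Complex.abs_re_le_norm q).trans_lt hq)).1
    simp; linarith
  have hne : ∀ q : ℂ, ‖q‖ ≤ 1 → d ≤ ‖1 - q0 * q‖ := by
    intro q hq
    have h1 : ‖(1:ℂ)‖ - ‖q0 * q‖ ≤ ‖1 - q0 * q‖ := norm_sub_norm_le _ _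
    rw [norm_one, norm_mul] at h1
    nlinarith
  have hGd : ∀ q : ℂ, ‖q‖ < 1 → DifferentiableAt ℂ G q := by
    intro q hq
    refine DifferentiableAt.div ?_ (by fun_prop) ?_
    · refine DifferentiableAt.mul (DifferentiableAt.cpow (by fun_prop) (by fun_prop) (hslit q hq)) (by fun_prop)
    · rw [← norm_pos_iff]; linarith [hne q hq.le]
  have hr : ∀ r : ℝ, ‖q0‖ < r → r < 1 → ∫ θ in (0:ℝ)..(2 * π), circleMap 0 r θ / (circleMap 0 r θ - q0) * G (circleMap 0 r θ) = 2 * π * G q0 := by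
    intro r h1 h2
    have hr0 : 0 < r := by linarith
    have hD : DifferentiableOn ℂ G (Metric.closedBall 0 r) := by
      intro q hq
      rw [mem_closedBall_zero_iff] at hq
      exact (hGd q (by linarith)).differentiableWithinAt
    have := hD.circleIntegral_sub_inv_smul (w := q0) (by rw [mem_ball_zero_iff]; exact h1)
    rw [circleIntegral] at this
    simp only [deriv_circleMap, smul_eq_mul] at this
    have h3 : ∫ θ in (0:ℝ)..(2 * π), circleMap 0 r θ * Complex.I * ((circleMap 0 r θ - q0)⁻¹ * G (circleMap 0 r θ)) = Complex.I * ∫ θ in (0:ℝ)..(2 * π), circleMap 0 r θ / (circleMap 0 r θ - q0) * G (circleMap 0 r θ) := by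
      rw [← intervalIntegral.integral_const_mul]
      congr 1; ext θ; ring
    rw [h3] at this
    refine mul_left_cancel₀ Complex.I_ne_zero ?_
    rw [this]; ring
  set m := min a.re 0 with hm
  set bd : ℝ → ℝ := fun θ => (d / 2)⁻¹ * (2 ^ |a.re| * Real.exp (π * |a.im|) * d⁻¹ * (1/π) ^ m) * |θ - π| ^ m with hbd
  have hbdi : IntervalIntegrable bd volume 0 (2 * π) :=
    (ii_abs_rpow π 0 (2 * π) m (lt_min ha (by norm_num))).const_mul _
  have hbound : ∀ r : ℝ, 1 - d / 2 ≤ r → r ≤ 1 → ∀ θ ∈ Set.Icc 0 (2 * π), θ ≠ π → ‖circleMap 0 r θ / (circleMap 0 r θ - q0) * G (circleMap 0 r θ)‖ ≤ bd θ := by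
    intro r h1 h2 θ hθ hθπ
    have hr0 : 0 ≤ r := by linarith
    set q := circleMap 0 r θ with hq
    have hqn : ‖q‖ = r := by rw [hq, norm_circleMap_zero, abs_of_nonneg hr0]
    have hq1 : ‖q‖ ≤ 1 := by rw [hqn]; exact h2
    have hlow := circ_lower r θ ⟨hr0, h2⟩ hθ
    have hpos : 0 < |θ - π| := abs_pos.mpr (sub_ne_zero.mpr hθπ)
    have hposd : 0 < |θ - π| / π := by positivity
    have ht0 : 0 < ‖1 + q‖ := lt_of_lt_of_le hposd hlow
    have ht2 : ‖1 + q‖ ≤ 2 := (norm_add_le _ _).trans (by rw [norm_one]; linarith)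
    have b1 : ‖q / (q - q0)‖ ≤ (d / 2)⁻¹ := by
      have h3 : d / 2 ≤ ‖q - q0‖ := by
        have h4 : ‖q‖ - ‖q0‖ ≤ ‖q - q0‖ := norm_sub_norm_le _ _
        linarith
      rw [norm_div, div_eq_mul_inv]
      have h5 : ‖q - q0‖⁻¹ ≤ (d/2)⁻¹ := inv_anti₀ (by positivity) h3
      calc _ ≤ 1 * (d/2)⁻¹ := by gcongr
        _ = _ := one_mul _
    have b2 : ‖1 + q‖ ^ a.re ≤ 2 ^ |a.re| * ((1/π) ^ m * |θ - π| ^ m) := by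
      have e1 : (1/π) ^ m * |θ - π| ^ m = (|θ - π| / π) ^ m := by
        rw [← Real.mul_rpow (by positivity) (by positivity)]; congr 1; ring
      rw [e1]
      rcases le_total 0 a.re with h | h
      · rw [hm, min_eq_right h, Real.rpow_zero, mul_one, abs_of_nonneg h]
        exact Real.rpow_le_rpow ht0.le ht2 h
      · rw [hm, min_eq_left h]
        have h6 : (1:ℝ) ≤ 2 ^ |a.re| := Real.one_le_rpow (by norm_num) (abs_nonneg _)
        have h7 := Real.rpow_le_rpow_of_nonpos hposd hlow h
        have h8 : 0 ≤ (|θ - π| / π) ^ a.re := by positivity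
        nlinarith
    have b3 : ‖(1 + q) ^ a‖ ≤ 2 ^ |a.re| * ((1/π) ^ m * |θ - π| ^ m) * Real.exp (π * |a.im|) := by
      refine (Complex.norm_cpow_le _ _).trans ?_
      rw [div_eq_mul_inv, ← Real.exp_neg]
      refine mul_le_mul b2 ?_ (Real.exp_pos _).le (by positivity)
      refine Real.exp_le_exp.mpr ?_
      refine (neg_le_abs _).trans ?_
      rw [abs_mul]
      exact mul_le_mul_of_nonneg_right (Complex.abs_arg_le_pi _) (abs_nonneg _)
    have b4 : ‖q ^ n‖ ≤ 1 := by rw [norm_pow]; exact pow_le_one₀ (norm_nonneg _) hq1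
    have b5 : ‖1 - q0 * q‖⁻¹ ≤ d⁻¹ := inv_anti₀ hd0 (hne q hq1)
    rw [norm_mul, hG, hbd]
    simp only
    rw [norm_div ((1 + q) ^ a * q ^ n), norm_mul ((1 + q) ^ a), div_eq_mul_inv (‖(1 + q) ^ a‖ * ‖q ^ n‖)]
    calc _ ≤ (d / 2)⁻¹ * ((2 ^ |a.re| * ((1/π) ^ m * |θ - π| ^ m) * Real.exp (π * |a.im|)) * 1 * d⁻¹) := by gcongr
      _ = _ := by ring
  have hmeas : ∀ r : ℝ, Measurable fun θ : ℝ => circleMap 0 r θ / (circleMap 0 r θ - q0) * G (circleMap 0 r θ) := by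
    intro r
    have h1 : Measurable (circleMap 0 r) := (continuous_circleMap 0 r).measurable
    have h2 : Measurable G := by simp only [hG]; fun_prop
    exact (h1.div (h1.sub measurable_const)).mul (h2.comp h1)
  have hae : ∀ᵐ θ : ℝ ∂volume, θ ≠ π := Measure.ae_ne volume _
  have h2pi : (0:ℝ) ≤ 2 * π := by positivity
  constructor
  · refine hbdi.mono_fun' (hmeas 1).aestronglyMeasurable ?_
    filter_upwards [ae_restrict_of_ae hae, ae_restrict_mem measurableSet_uIoc] with θ h1 h2
    rw [Set.uIoc_of_le h2pi] at h2
    exact hbound 1 (by linarith) le_rfl θ ⟨h2.1.le, h2.2⟩ h1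
  · have hlim : Tendsto (fun r : ℝ => ∫ θ in (0:ℝ)..(2 * π), circleMap 0 r θ / (circleMap 0 r θ - q0) * G (circleMap 0 r θ)) (𝓝[<] 1)
        (𝓝 (∫ θ in (0:ℝ)..(2 * π), circleMap 0 1 θ / (circleMap 0 1 θ - q0) * G (circleMap 0 1 θ))) := by
      refine intervalIntegral.tendsto_integral_filter_of_dominated_convergence bd ?_ ?_ hbdi ?_
      · exact Eventually.of_forall fun r => (hmeas r).aestronglyMeasurable
      · have h1 : ∀ᶠ r : ℝ in 𝓝[<] 1, 1 - d / 2 < r := (eventually_gt_nhds (by linarith)).filter_mono nhdsWithin_le_nhds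
        filter_upwards [h1, self_mem_nhdsWithin] with r hr1 hr2
        filter_upwards [hae] with θ hθ1 hθ2
        rw [Set.uIoc_of_le h2pi] at hθ2
        exact hbound r hr1.le (le_of_lt hr2) θ ⟨hθ2.1.le, hθ2.2⟩ hθ1
      · filter_upwards [hae] with θ hθ1 hθ2
        rw [Set.uIoc_of_le h2pi] at hθ2
        have hc : Tendsto (fun r : ℝ => circleMap 0 r θ) (𝓝[<] 1) (𝓝 (circleMap 0 1 θ)) := by
          have : Continuous (fun r : ℝ => circleMap 0 r θ) := by unfold circleMap; fun_prop
          exact (this.tendsto 1).mono_left nhdsWithin_le_nhds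
        have hq1 : ‖circleMap 0 1 θ‖ = 1 := by rw [norm_circleMap_zero, abs_one]
        have hne1 : circleMap 0 1 θ - q0 ≠ 0 := by
          intro h
          rw [sub_eq_zero] at h
          rw [h] at hq1; linarith
        have hne2 : 1 - q0 * circleMap 0 1 θ ≠ 0 := by
          rw [← norm_pos_iff]; linarith [hne _ hq1.le]
        have hsl : 1 + circleMap 0 1 θ ∈ Complex.slitPlane := by
          have hlow := circ_lower 1 θ ⟨by norm_num, le_rfl⟩ ⟨hθ2.1.le, hθ2.2⟩
          have hpos : 0 < |θ - π| := abs_pos.mpr (sub_ne_zero.mpr hθ1)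
          have hposd : 0 < |θ - π| / π := by positivity
          by_contra hcon
          rw [Complex.mem_slitPlane_iff] at hcon
          push Not at hcon
          obtain ⟨c1, c2⟩ := hcon
          have h3 := Complex.abs_re_le_norm (circleMap 0 1 θ)
          rw [hq1, abs_le] at h3
          simp only [Complex.add_re, Complex.one_re, Complex.add_im, Complex.one_im] at c1 c2
          have : 1 + circleMap 0 1 θ = 0 := by
            apply Complex.ext
            · simp only [Complex.add_re, Complex.one_re, Complex.zero_re]; linarith [h3.1]
            · simpa using c2
          rw [this, norm_zero] at hlow
          linarith
        refine Tendsto.mul (hc.div (hc.sub_const _) hne1) ?_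
        refine ContinuousAt.tendsto (f := G) ?_ |>.comp hc
        refine ContinuousAt.div ?_ (by fun_prop) hne2
        exact ContinuousAt.mul (ContinuousAt.cpow (by fun_prop) (by fun_prop) hsl) (by fun_prop)
    have hconst : Tendsto (fun r : ℝ => ∫ θ in (0:ℝ)..(2 * π), circleMap 0 r θ / (circleMap 0 r θ - q0) * G (circleMap 0 r θ)) (𝓝[<] 1) (𝓝 (2 * π * G q0)) := by
      refine tendsto_const_nhds.congr' ?_
      have h1 : ∀ᶠ r : ℝ in 𝓝[<] 1, ‖q0‖ < r := (eventually_gt_nhds hq0).filter_mono nhdsWithin_le_nhds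
      filter_upwards [h1, self_mem_nhdsWithin] with r hr1 hr2
      exact (hr r hr1 hr2).symm
    exact tendsto_nhds_unique hlim hconst


lemma WW_facts (z : ℂ) (hz : z.im ≠ 0) (s : ℝ) (hs : 0 < s) :
    (WW z s) ^ 2 = 1 - 2 * (s:ℂ) / (1 + z) ∧ 0 < (WW z s).re := by
  constructor
  · have := Complex.cpow_nat_inv_pow (1 - 2 * (s:ℂ) / (1 + z)) (n := 2) (by norm_num)
    rw [WW]
    exact_mod_cast this
  · rw [WW, Complex.cpow_inv_two_re]
    apply Real.sqrt_pos.mpr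
    set u := 1 - 2 * (s:ℂ) / (1 + z) with hu
    have h1 : |u.re| < ‖u‖ := by
      rw [Complex.abs_re_lt_norm, hu]
      have : 2 * (s:ℂ) = ((2 * s : ℝ) : ℂ) := by push_cast; rfl
      rw [this, div_eq_mul_inv, Complex.sub_im, Complex.im_ofReal_mul, Complex.inv_im]
      have hn : Complex.normSq (1 + z) ≠ 0 := by
        rw [Ne, Complex.normSq_eq_zero]
        intro h
        have := congrArg Complex.im h
        simp at this
        exact hz this
      simp [hn, hz, hs.ne']
    have := (abs_lt.mp h1).1
    linarith

lemma one_add_exp_cpow (a : ℂ) (θ : ℝ) (hθ : |θ| < π) :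
    (1 + Complex.exp (θ * Complex.I)) ^ a = Complex.exp (a * (Real.log (2 * Real.cos (θ/2)) : ℝ)) * Complex.exp (a * (θ / 2) * Complex.I) := by
  obtain ⟨h1, h2⟩ := abs_lt.mp hθ
  have hc : 0 < 2 * Real.cos (θ/2) := by
    have := Real.cos_pos_of_mem_Ioo (x := θ/2) ⟨by linarith, by linarith⟩
    linarith
  have e : 1 + Complex.exp (θ * Complex.I) = ((2 * Real.cos (θ/2) : ℝ) : ℂ) * Complex.exp ((θ/2 : ℝ) * Complex.I) := by
    push_cast
    rw [Complex.two_cos, add_mul, ← Complex.exp_add, ← Complex.exp_add]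
    rw [show (θ:ℂ)/2 * Complex.I + θ/2 * Complex.I = θ * Complex.I by ring,
      show -((θ:ℂ)/2) * Complex.I + θ/2 * Complex.I = 0 by ring, Complex.exp_zero]
    ring
  have hl : Complex.log (1 + Complex.exp (θ * Complex.I)) = (Real.log (2 * Real.cos (θ/2)) : ℝ) + ((θ/2 : ℝ)) * Complex.I := by
    rw [e, Complex.log_ofReal_mul hc (Complex.exp_ne_zero _), Complex.log_exp]
    · simp; linarith
    · simp; linarith
  have hne : 1 + Complex.exp (θ * Complex.I) ≠ 0 := by
    rw [e]; exact mul_ne_zero (by exact_mod_cast hc.ne') (Complex.exp_ne_zero _)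
  rw [Complex.cpow_def_of_ne_zero hne, hl, ← Complex.exp_add]
  congr 1
  push_cast; ring

lemma den_ne (z : ℂ) (hz : z.im ≠ 0) (t : ℝ) : 1 + z - (t:ℂ) ≠ 0 := by
  intro h
  have := congrArg Complex.im h
  simp at this
  exact hz this

lemma circ2 (σ : ℂ) (hσ : -1 < σ.re) (n : ℕ) (z : ℂ) (hz : z.im ≠ 0) (s : ℝ) (hs : 0 < s) :
    ∫ β in Set.Ioo 0 π, Complex.cos ((σ + n + 1/2) * β) * ((1 + Real.cos β : ℝ) : ℂ) ^ (σ + 1/2) / (1 + z - (s * (1 + Real.cos β) : ℝ)) =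
     π * (2:ℂ) ^ (σ + n + 1/2) * (s:ℂ)^n * ((1 + z) ^ (n+1))⁻¹ * ((1 + WW z s) ^ (-2 * (σ + n) - 1) * (WW z s)⁻¹) := by
  have hpi := Real.pi_pos
  obtain ⟨hw2, hwre⟩ := WW_facts z hz s hs
  set w := WW z s with hw
  have hZ : 1 + z ≠ 0 := by simpa using den_ne z hz 0
  have hsC : (s:ℂ) ≠ 0 := by exact_mod_cast hs.ne'
  have h1w : 1 + w ≠ 0 := by
    intro h
    have := congrArg Complex.re h
    simp at this
    linarith
  have hw0 : w ≠ 0 := by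
    intro h
    rw [h] at hwre; simp at hwre
  set q0 := (1 - w) / (1 + w) with hq0
  have hq0n : ‖q0‖ < 1 := by
    rw [hq0, norm_div, div_lt_one (norm_pos_iff.mpr h1w)]
    refine lt_of_pow_lt_pow_left₀ 2 (norm_nonneg _) ?_
    rw [← Complex.normSq_eq_norm_sq, ← Complex.normSq_eq_norm_sq, Complex.normSq_apply, Complex.normSq_apply]
    simp
    nlinarith
  have hsw : 2 * (s:ℂ) = (1 - w^2) * (1 + z) := by
    rw [hw2]; field_simp; ring
  have hq0s : (s:ℂ) * (1 + q0)^2 = 2 * (1 + z) * q0 := by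
    rw [hq0]; field_simp
    linear_combination 2 * hsw
  have hq0ne : q0 ≠ 0 := by
    intro h
    rw [h] at hq0s
    simp at hq0s
    exact hs.ne' hq0s
  have hq0e : q0 = 2 * s / ((1+z) * (1+w)^2) := by
    rw [hsw, hq0]; field_simp; ring
  obtain ⟨h_int, hval⟩ := circ1 (2 * σ + 1) (by simp; linarith) n q0 hq0n
  set h : ℝ → ℂ := fun θ => (1 + circleMap 0 1 θ) ^ (2 * σ + 1) * (circleMap 0 1 θ) ^ n / (1 + z - (s * (1 + Real.cos θ) : ℝ)) with hh
  have hcm : ∀ θ : ℝ, circleMap 0 1 θ = Complex.exp (θ * Complex.I) := by intro θ; simp [circleMap]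
  have key : ∀ θ : ℝ, h θ = 2 * q0 / s * (circleMap 0 1 θ / (circleMap 0 1 θ - q0) * ((1 + circleMap 0 1 θ) ^ (2 * σ + 1) * (circleMap 0 1 θ) ^ n / (1 - q0 * circleMap 0 1 θ))) := by
    intro θ
    have hD := den_ne z hz (s * (1 + Real.cos θ))
    set q := circleMap 0 1 θ with hq
    have hqn : ‖q‖ = 1 := by rw [hq, norm_circleMap_zero, abs_one]
    have hqne : q ≠ 0 := by rw [← norm_pos_iff, hqn]; norm_num
    have hcos : (Real.cos θ : ℂ) = (q + q⁻¹) / 2 := by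
      rw [hq, hcm, Complex.ofReal_cos, Complex.cos, ← Complex.exp_neg, neg_mul]
    have hn1 : q - q0 ≠ 0 := by
      intro h; rw [sub_eq_zero] at h; rw [h] at hqn; linarith
    have hn2 : 1 - q0 * q ≠ 0 := by
      intro h; rw [sub_eq_zero] at h
      have := congrArg norm h
      rw [norm_mul, hqn, norm_one] at this; linarith
    have hD2 : 1 + z - (s * (1 + Real.cos θ) : ℝ) = s * ((q - q0) * (1 - q0 * q)) / (2 * q * q0) := by
      push_cast
      rw [← Complex.ofReal_cos, hcos]
      field_simp
      linear_combination (-q) * hq0s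
    simp only [hh]
    rw [hD2, ← hq]
    field_simp
  have h_int2 : IntervalIntegrable h volume 0 (2*π) := by
    have := h_int.const_mul (2 * q0 / s)
    exact this.congr (fun θ _ => (key θ).symm)
  have hval2 : ∫ θ in (0:ℝ)..(2*π), h θ = 2 * q0 / s * (2 * π * ((1 + q0) ^ (2 * σ + 1) * q0 ^ n / (1 - q0 * q0))) := by
    rw [← hval, ← intervalIntegral.integral_const_mul]
    congr 1; ext θ; exact key θ
  have hi1 : IntervalIntegrable h volume 0 π := h_int2.mono_set (by
    rw [Set.uIcc_of_le hpi.le, Set.uIcc_of_le (by linarith)]; exact Set.Icc_subset_Icc le_rfl (by linarith))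
  have hi2 : IntervalIntegrable h volume π (2*π) := h_int2.mono_set (by
    rw [Set.uIcc_of_le (by linarith), Set.uIcc_of_le (by linarith)]; exact Set.Icc_subset_Icc hpi.le le_rfl)
  have hsplit := intervalIntegral.integral_add_adjacent_intervals hi1 hi2
  have hrefl : ∫ θ in (π:ℝ)..(2*π), h θ = ∫ θ in (0:ℝ)..π, h (2*π - θ) := by
    rw [intervalIntegral.integral_comp_sub_left]; congr 1 <;> ring
  have hi3 : IntervalIntegrable (fun θ => h (2*π - θ)) volume 0 π := by
    have := (hi2.comp_sub_left (2*π)).symm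
    convert this using 1 <;> ring
  rw [hrefl, ← intervalIntegral.integral_add hi1 hi3, intervalIntegral.integral_of_le hpi.le, integral_Ioc_eq_integral_Ioo] at hsplit
  have hsym : ∀ β ∈ Set.Ioo 0 π, h β + h (2*π - β) = 2 * (2:ℂ) ^ (σ + 1/2) * (Complex.cos ((σ + n + 1/2) * β) * ((1 + Real.cos β : ℝ) : ℂ) ^ (σ + 1/2) / (1 + z - (s * (1 + Real.cos β) : ℝ))) := by
    intro β hβ
    have hab : |β| < π := by rw [abs_lt]; constructor <;> linarith [hβ.1, hβ.2]
    have hab' : |-β| < π := by rwa [abs_neg]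
    have hcm2 : circleMap 0 1 (2*π - β) = Complex.exp ((-β : ℝ) * Complex.I) := by
      rw [hcm]; push_cast
      rw [show (2 * (π:ℂ) - β) * Complex.I = -β * Complex.I + 2 * π * Complex.I by ring, Complex.exp_periodic]
    have hc : 0 < Real.cos (β/2) := Real.cos_pos_of_mem_Ioo ⟨by linarith [hβ.1], by linarith [hβ.2]⟩
    have hc2 : 2 * (1 + Real.cos β) = (2 * Real.cos (β/2))^2 := by
      have : Real.cos β = 2 * Real.cos (β/2) ^ 2 - 1 := by
        rw [← Real.cos_two_mul]; congr 1; ring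
      rw [this]; ring
    have hcp : 0 < 1 + Real.cos β := by nlinarith
    have hpow : (2:ℂ) ^ (σ + 1/2) * ((1 + Real.cos β : ℝ) : ℂ) ^ (σ + 1/2) = Complex.exp ((2*σ+1) * (Real.log (2 * Real.cos (β/2)) : ℝ)) := by
      have : (2:ℂ) = ((2:ℝ):ℂ) := by norm_num
      rw [this, ← Complex.mul_cpow_ofReal_nonneg (by norm_num) hcp.le, ← Complex.ofReal_mul, hc2, cpow_pos_exp _ (by positivity), Real.log_pow]
      congr 1; push_cast; ring
    simp only [hh]
    rw [hcm2, hcm, one_add_exp_cpow _ β hab, one_add_exp_cpow _ (-β) hab', Real.cos_two_pi_sub,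
      show -β/2 = -(β/2) by ring, Real.cos_neg, ← hpow, ← Complex.exp_nat_mul, ← Complex.exp_nat_mul, ← add_div]
    rw [mul_assoc _ (Complex.exp _) (Complex.exp _), mul_assoc _ (Complex.exp _) (Complex.exp _), ← Complex.exp_add, ← Complex.exp_add, ← mul_add]
    rw [Complex.cos]
    have e1 : (2 * σ + 1) * (β / 2) * Complex.I + n * (β * Complex.I) = (σ + n + 1/2) * β * Complex.I := by ring
    have e2 : (2 * σ + 1) * ((-β : ℝ) / 2) * Complex.I + n * ((-β : ℝ) * Complex.I) = -((σ + n + 1/2) * β) * Complex.I := by push_cast; ring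
    rw [e1, e2]
    ring
  rw [setIntegral_congr_fun measurableSet_Ioo hsym, MeasureTheory.integral_const_mul, hval2] at hsplit
  have h2p : (2:ℂ) ^ (σ + 1/2) ≠ 0 := by
    rw [Ne, Complex.cpow_eq_zero_iff]; simp
  have hT : (2:ℂ) * 2 ^ (σ + 1/2) ≠ 0 := mul_ne_zero two_ne_zero h2p
  refine mul_left_cancel₀ hT ?_
  rw [hsplit]
  have hq1 : 1 + q0 = ((2:ℝ):ℂ) * (1 + w)⁻¹ := by
    rw [hq0]; push_cast; field_simp; ring
  have harg : (1 + w).arg ≠ π := by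
    intro h
    rw [Complex.arg_eq_pi_iff] at h
    simp at h; linarith
  have hpw1 : (1 + q0) ^ (2 * σ + 1) = 2 ^ (2*σ+1) * (1+w)^(-(2*σ+1)) := by
    rw [hq1]
    have h3 := Complex.real_smul (x := 2) (z := (1+w)⁻¹)
    rw [Complex.cpow_neg, ← Complex.inv_cpow _ _ harg]
    rw [Complex.cpow_def_of_ne_zero (mul_ne_zero (by norm_num) (inv_ne_zero h1w)), Complex.log_ofReal_mul (by norm_num) (inv_ne_zero h1w),
      Complex.cpow_def_of_ne_zero two_ne_zero, Complex.cpow_def_of_ne_zero (inv_ne_zero h1w), ← Complex.exp_add]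
    congr 1
    have : Complex.log 2 = (Real.log 2 : ℝ) := by rw [Complex.ofReal_log (by norm_num)]; norm_num
    rw [this]; ring
  have hpw2 : (1+w)^(-2 * (σ + n) - 1) = (1+w)^(-(2*σ+1)) * ((1+w)^(2*n))⁻¹ := by
    rw [show -2 * (σ + n) - 1 = -(2*σ+1) - ((2*n : ℕ) : ℂ) by push_cast; ring, Complex.cpow_sub _ _ h1w, Complex.cpow_natCast, div_eq_mul_inv]
  have hpw3 : (2:ℂ)^(σ + n + 1/2) = 2^(σ+1/2) * 2^n := by
    rw [show σ + n + 1/2 = σ + 1/2 + (n:ℂ) by ring, Complex.cpow_add _ _ two_ne_zero, Complex.cpow_natCast]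
  have hpw4 : (2:ℂ)^(2*σ+1) = 2^(σ+1/2) * 2^(σ+1/2) := by
    rw [← Complex.cpow_add _ _ two_ne_zero]; congr 1; ring
  have hq2 : 1 - q0 * q0 = 4 * w / (1+w)^2 := by
    rw [hq0]; field_simp; ring
  rw [hpw1, hpw2, hpw3, hpw4, hq2, hq0e, div_pow, mul_pow, mul_pow, ← pow_mul, pow_succ (1+z) n]
  field_simp
  ring


lemma sub01 {E : Type*} [NormedAddCommGroup E] [NormedSpace ℝ E] (g : ℝ → E) (b : ℝ) (hb : -1 < b) :
    ∫ ξ in Set.Ioo (-1) b, g ξ = ∫ s in Set.Ioo (0:ℝ) 1, (1 + b) • g ((1 + b) * s + -1) := by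
  have h := intervalIntegral.smul_integral_comp_mul_add (a := 0) (b := 1) g (1 + b) (-1)
  rw [← integral_Ioc_eq_integral_Ioo, ← integral_Ioc_eq_integral_Ioo, ← intervalIntegral.integral_of_le hb.le,
    ← intervalIntegral.integral_of_le zero_le_one, intervalIntegral.integral_smul, h]
  congr 1 <;> ring

lemma sub01_int (g : ℝ → ℂ) (b : ℝ) (hb : -1 < b)
    (h : IntegrableOn (fun s => g ((1 + b) * s + -1)) (Set.Ioo (0:ℝ) 1)) : IntegrableOn g (Set.Ioo (-1) b) := by
  rw [← intervalIntegrable_iff_integrableOn_Ioo_of_le zero_le_one] at h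
  rw [← intervalIntegrable_iff_integrableOn_Ioo_of_le hb.le]
  have hb0 : 1 + b ≠ 0 := by linarith
  have h1 := (h.comp_mul_right (c := (1 + b)⁻¹)).comp_add_right 1
  convert h1 using 1
  · ext ξ
    congr 1
    field_simp
    ring
  · simp
  · simp

noncomputable def kk (σ μ : ℂ) (ξ β : ℝ) : ℂ :=
  ((1 + ξ : ℝ) : ℂ) ^ σ * (Complex.cos (μ * β) * ((1 / √(2 * (Real.cos β - ξ)) : ℝ) : ℂ))

noncomputable def g1 (σ μ : ℂ) (β : ℝ) : ℂ := Complex.cos (μ * β) * ((1 + Real.cos β : ℝ) : ℂ) ^ (σ + 1/2)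

noncomputable def g2 (σ : ℂ) (s : ℝ) : ℂ := (s:ℂ) ^ σ * ((1 / √(1 - s) : ℝ) : ℂ)

lemma cos_gt (β : ℝ) (hβ : β ∈ Set.Ioo 0 π) : -1 < Real.cos β := by
  rw [← Real.cos_pi]
  exact Real.cos_lt_cos_of_nonneg_of_le_pi hβ.1.le le_rfl hβ.2

lemma kk_sub (σ μ : ℂ) (β s : ℝ) (hβ : β ∈ Set.Ioo 0 π) (hs : s ∈ Set.Ioo (0:ℝ) 1) :
    (1 + Real.cos β) • kk σ μ ((1 + Real.cos β) * s + -1) β = ((1 / √2 : ℝ) : ℂ) * (g1 σ μ β * g2 σ s) := by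
  have hb : 0 < 1 + Real.cos β := by linarith [cos_gt β hβ]
  set B := 1 + Real.cos β with hB
  have hcb : Real.cos β = B - 1 := by rw [hB]; ring
  have hBC : (B:ℂ) ≠ 0 := by exact_mod_cast hb.ne'
  rw [kk, g1, g2, hcb, show 1 + (B * s + -1) = B * s by ring, show 2 * (B - 1 - (B * s + -1)) = 2 * (B * (1 - s)) by ring,
    show 1 + (B - 1) = B by ring, Real.sqrt_mul (by norm_num), Real.sqrt_mul hb.le, Complex.ofReal_mul,
    Complex.mul_cpow_ofReal_nonneg hb.le hs.1.le, Complex.cpow_add _ _ hBC, Complex.real_smul]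
  have h1 : (B:ℂ) ^ (1/2 : ℂ) = ((√B : ℝ) : ℂ) := by
    rw [Real.sqrt_eq_rpow, Complex.ofReal_cpow hb.le]; norm_num
  have h2 : (B:ℂ) = ((√B : ℝ) : ℂ) * ((√B : ℝ) : ℂ) := by
    rw [← Complex.ofReal_mul, Real.mul_self_sqrt hb.le]
  have h3 : ((√B : ℝ) : ℂ) ≠ 0 := by
    exact_mod_cast (Real.sqrt_pos.mpr hb).ne'
  rw [h1]
  nth_rewrite 1 [h2]
  push_cast
  simp only [one_div, mul_inv]
  field_simp

lemma kk_zero (σ μ : ℂ) (ξ β : ℝ) (h : Real.cos β ≤ ξ) : kk σ μ ξ β = 0 := by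
  rw [kk, Real.sqrt_eq_zero_of_nonpos (by linarith)]; simp

lemma g1_int (σ μ : ℂ) (hσ : -1 < σ.re) : IntegrableOn (g1 σ μ) (Set.Ioo 0 π) := by
  have hpi := Real.pi_pos
  obtain ⟨h, -⟩ := circ1 (2 * σ + 1) (by simp; linarith) 0 0 (by simp)
  have h1 : IntervalIntegrable _ volume 0 π := h.mono_set (by
    rw [Set.uIcc_of_le hpi.le, Set.uIcc_of_le (by linarith)]; exact Set.Icc_subset_Icc le_rfl (by linarith))
  have h2 := h1.mul_continuousOn (g := fun β : ℝ => Complex.cos (μ * β) * Complex.exp (-((2 * σ + 1) * (β / 2) * Complex.I)) * ((2:ℂ) ^ (σ + 1/2))⁻¹) (by fun_prop)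
  rw [intervalIntegrable_iff_integrableOn_Ioo_of_le hpi.le] at h2
  refine h2.congr_fun ?_ measurableSet_Ioo
  intro β hβ
  have hab : |β| < π := by rw [abs_lt]; constructor <;> linarith [hβ.1, hβ.2]
  have hc : 0 < Real.cos (β/2) := Real.cos_pos_of_mem_Ioo ⟨by linarith [hβ.1], by linarith [hβ.2]⟩
  have hc2 : 2 * (1 + Real.cos β) = (2 * Real.cos (β/2))^2 := by
    have : Real.cos β = 2 * Real.cos (β/2) ^ 2 - 1 := by
      rw [← Real.cos_two_mul]; congr 1; ring
    rw [this]; ring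
  have hcp : 0 < 1 + Real.cos β := by nlinarith
  have hpow : Complex.exp ((2*σ+1) * (Real.log (2 * Real.cos (β/2)) : ℝ)) = (2:ℂ) ^ (σ + 1/2) * ((1 + Real.cos β : ℝ) : ℂ) ^ (σ + 1/2) := by
    have : (2:ℂ) = ((2:ℝ):ℂ) := by norm_num
    rw [this, ← Complex.mul_cpow_ofReal_nonneg (by norm_num) hcp.le, ← Complex.ofReal_mul, hc2, cpow_pos_exp _ (by positivity), Real.log_pow]
    congr 1; push_cast; ring
  have h2p : (2:ℂ) ^ (σ + 1/2) ≠ 0 := by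
    rw [Ne, Complex.cpow_eq_zero_iff]; simp
  have hcm : circleMap 0 1 β = Complex.exp (β * Complex.I) := by simp [circleMap]
  simp only [hcm, sub_zero, pow_zero, zero_mul, mul_one, div_one, div_self (Complex.exp_ne_zero _), one_mul]
  rw [one_add_exp_cpow _ β hab, hpow, g1, Complex.exp_neg]
  have := Complex.exp_ne_zero ((2 * σ + 1) * (β / 2) * Complex.I)
  field_simp

lemma g2_int (σ : ℂ) (hσ : -1 < σ.re) : IntegrableOn (g2 σ) (Set.Ioo 0 1) := by
  refine Integrable.mono' (int_three σ.re (1/2) hσ ⟨by norm_num, by norm_num⟩) ?_ ?_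
  · have : Measurable (g2 σ) := by unfold g2; fun_prop
    exact this.aestronglyMeasurable
  · filter_upwards [ae_restrict_mem measurableSet_Ioo, ae_restrict_of_ae (Measure.ae_ne volume (1/2:ℝ))] with s hs hs2
    have h1 : 0 < 1 - s := by linarith [hs.2]
    have h2 : 0 < |s - 1/2| := abs_pos.mpr (sub_ne_zero.mpr hs2)
    have h3 : |s - 1/2| ≤ 1 := by rw [abs_le]; constructor <;> linarith [hs.1, hs.2]
    have h4 : 1 ≤ |s - 1/2| ^ (-1/2 : ℝ) := Real.one_le_rpow_of_pos_of_le_one_of_nonpos h2 h3 (by norm_num)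
    rw [g2, norm_mul, Complex.norm_cpow_eq_rpow_re_of_pos hs.1, Complex.norm_real, Real.norm_of_nonneg (by positivity),
      sub_zero, abs_of_pos hs.1, abs_sub_comm s 1, abs_of_pos h1]
    have h5 : 1 / √(1 - s) = (1 - s) ^ (-1/2 : ℝ) := by
      rw [Real.sqrt_eq_rpow, one_div, ← Real.rpow_neg h1.le]; norm_num
    rw [h5]
    have h6 : 0 ≤ s ^ σ.re * (1 - s) ^ (-1/2 : ℝ) := by
      have := hs.1.le; positivity
    nlinarith

lemma kk_int (σ μ : ℂ) (hσ : -1 < σ.re) :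
    Integrable (Function.uncurry (kk σ μ)) ((volume.restrict (Set.Ioo (-1:ℝ) 1)).prod (volume.restrict (Set.Ioo 0 π))) := by
  have hm : Measurable (Function.uncurry (kk σ μ)) := by
    unfold Function.uncurry kk; fun_prop
  rw [integrable_prod_iff' hm.aestronglyMeasurable]
  constructor
  · filter_upwards [ae_restrict_mem measurableSet_Ioo] with β hβ
    have hb := cos_gt β hβ
    have hbC : ((1 + Real.cos β : ℝ) : ℂ) ≠ 0 := by
      have : 1 + Real.cos β ≠ 0 := by linarith
      exact_mod_cast this
    have h1 : IntegrableOn (fun ξ => kk σ μ ξ β) (Set.Ioo (-1) (Real.cos β)) := by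
      refine sub01_int _ _ hb ?_
      have := (g2_int σ hσ).const_mul (((1 + Real.cos β : ℝ) : ℂ)⁻¹ * (((1 / √2 : ℝ) : ℂ) * g1 σ μ β))
      refine IntegrableOn.congr_fun this ?_ measurableSet_Ioo
      intro s hs
      have h2 := kk_sub σ μ β s hβ hs
      rw [Complex.real_smul] at h2
      simp only
      rw [mul_assoc, mul_assoc, ← h2, inv_mul_cancel_left₀ hbC]
    refine IntegrableOn.of_forall_sdiff_eq_zero h1 measurableSet_Ioo ?_
    intro ξ hξ
    refine kk_zero _ _ _ _ ?_
    by_contra hcon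
    exact hξ.2 ⟨hξ.1.1, not_le.mp hcon⟩
  · have h1 := ((g1_int σ μ hσ).norm.mul_const (∫ s in Set.Ioo (0:ℝ) 1, ‖g2 σ s‖)).const_mul (1 / √2)
    refine IntegrableOn.congr_fun h1 ?_ measurableSet_Ioo
    intro β hβ
    have hb := cos_gt β hβ
    have hb' : 0 < 1 + Real.cos β := by linarith
    simp only [Function.uncurry]
    rw [setIntegral_eq_of_subset_of_forall_sdiff_eq_zero (f := fun ξ => ‖kk σ μ ξ β‖) (t := Set.Ioo (-1) 1) (s := Set.Ioo (-1) (Real.cos β)) measurableSet_Ioo, sub01 _ _ hb,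
      ← MeasureTheory.integral_const_mul, ← MeasureTheory.integral_const_mul]
    · refine setIntegral_congr_fun measurableSet_Ioo fun s hs => ?_
      have h2 := congrArg norm (kk_sub σ μ β s hβ hs)
      rw [norm_smul, norm_mul, norm_mul, Complex.norm_real, Real.norm_of_nonneg hb'.le, Real.norm_of_nonneg (by positivity)] at h2
      exact h2.symm
    · exact Set.Ioo_subset_Ioo le_rfl (Real.cos_le_one _)
    · intro ξ hξ
      rw [kk_zero, norm_zero]
      by_contra hcon
      exact hξ.2 ⟨hξ.1.1, not_le.mp hcon⟩

lemma f_eq (σ : ℂ) (n : ℕ) (ξ : ℝ) (hξ : ξ ∈ Set.Ioo (-1:ℝ) 1) :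
    ((1 + ξ : ℝ) : ℂ) ^ σ * legendreP (σ + n) ξ = ((2/π:ℝ):ℂ) * ∫ β in Set.Ioo 0 π, kk σ (σ + n + 1/2) ξ β := by
  rw [legendreP_eq_int _ _ hξ]
  simp only [kk]
  rw [MeasureTheory.integral_const_mul]
  ring

lemma f_int (σ : ℂ) (hσ : -1 < σ.re) (n : ℕ) :
    IntegrableOn (fun ξ : ℝ => ((1 + ξ : ℝ) : ℂ) ^ σ * legendreP (σ + n) ξ) (Set.Ioo (-1) 1) := by
  have h := (kk_int σ (σ + n + 1/2) hσ).integral_prod_left.const_mul ((2/π:ℝ):ℂ)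
  refine IntegrableOn.congr_fun h ?_ measurableSet_Ioo
  intro ξ hξ
  exact (f_eq σ n ξ hξ).symm

lemma inv_bd (z : ℂ) (hz : z.im ≠ 0) (t : ℝ) : ‖(z - (t:ℂ))⁻¹‖ ≤ |z.im|⁻¹ := by
  rw [norm_inv]
  refine inv_anti₀ (abs_pos.mpr hz) ?_
  have := Complex.abs_im_le_norm (z - (t:ℂ))
  simpa using this

lemma F_eq (σ : ℂ) (hσ : -1 < σ.re) (n : ℕ) (z : ℂ) (hz : z.im ≠ 0) :
    ∫ ξ in Set.Ioo (-1:ℝ) 1, ((1 + ξ : ℝ) : ℂ) ^ σ * legendreP (σ + n) ξ / (z - ξ) =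
      2 * (2:ℂ) ^ (σ + n) * ((1 + z) ^ (n+1))⁻¹ * JJ (σ + n) z := by
  set μ := σ + n + 1/2 with hμ
  have hz1 : (1 + z).im ≠ 0 := by simpa using hz
  have e1 : ∫ ξ in Set.Ioo (-1:ℝ) 1, ((1 + ξ : ℝ) : ℂ) ^ σ * legendreP (σ + n) ξ / (z - ξ) =
      ((2/π:ℝ):ℂ) * ∫ ξ in Set.Ioo (-1:ℝ) 1, ∫ β in Set.Ioo 0 π, kk σ μ ξ β * (z - ξ)⁻¹ := by
    rw [← MeasureTheory.integral_const_mul]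
    refine setIntegral_congr_fun measurableSet_Ioo fun ξ hξ => ?_
    rw [f_eq σ n ξ hξ, MeasureTheory.integral_mul_const]
    ring
  have i1 : Integrable (Function.uncurry fun ξ β : ℝ => kk σ μ ξ β * (z - ξ)⁻¹)
      ((volume.restrict (Set.Ioo (-1:ℝ) 1)).prod (volume.restrict (Set.Ioo 0 π))) := by
    refine Integrable.mul_bdd (c := |z.im|⁻¹) (g := fun p : ℝ × ℝ => (z - (p.1:ℂ))⁻¹) (kk_int σ μ hσ) ?_ ?_
    · exact (by fun_prop : Measurable (fun p : ℝ × ℝ => (z - (p.1:ℂ))⁻¹)).aestronglyMeasurable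
    · exact Eventually.of_forall fun p => inv_bd z hz _
  have e2 : ∀ β ∈ Set.Ioo 0 π, ∫ ξ in Set.Ioo (-1:ℝ) 1, kk σ μ ξ β * (z - ξ)⁻¹ =
      ∫ s in Set.Ioo (0:ℝ) 1, ((1 / √2 : ℝ) : ℂ) * (g1 σ μ β * g2 σ s * (1 + z - (s * (1 + Real.cos β) : ℝ))⁻¹) := by
    intro β hβ
    have hb := cos_gt β hβ
    rw [setIntegral_eq_of_subset_of_forall_sdiff_eq_zero (s := Set.Ioo (-1) (Real.cos β)) measurableSet_Ioo, sub01 _ _ hb]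
    · refine setIntegral_congr_fun measurableSet_Ioo fun s hs => ?_
      rw [← smul_mul_assoc, kk_sub σ μ β s hβ hs, mul_assoc]
      congr 3
      push_cast; ring
    · exact Set.Ioo_subset_Ioo le_rfl (Real.cos_le_one _)
    · intro ξ hξ
      rw [kk_zero, zero_mul]
      by_contra hcon
      exact hξ.2 ⟨hξ.1.1, not_le.mp hcon⟩
  have i2 : Integrable (Function.uncurry fun β s : ℝ => ((1 / √2 : ℝ) : ℂ) * (g1 σ μ β * g2 σ s * (1 + z - (s * (1 + Real.cos β) : ℝ))⁻¹))
      ((volume.restrict (Set.Ioo 0 π)).prod (volume.restrict (Set.Ioo (0:ℝ) 1))) := by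
    refine Integrable.const_mul ?_ _
    refine Integrable.mul_bdd (c := |(1+z).im|⁻¹) (g := fun p : ℝ × ℝ => (1 + z - (p.2 * (1 + Real.cos p.1) : ℝ))⁻¹) ((g1_int σ μ hσ).mul_prod (g2_int σ hσ)) ?_ ?_
    · exact (by fun_prop : Measurable (fun p : ℝ × ℝ => (1 + z - (p.2 * (1 + Real.cos p.1) : ℝ))⁻¹)).aestronglyMeasurable
    · exact Eventually.of_forall fun p => inv_bd (1 + z) hz1 _
  have h2 : (2:ℂ) ^ μ = 2 ^ (σ + n) * ((√2 : ℝ) : ℂ) := by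
    rw [hμ, Complex.cpow_add _ _ two_ne_zero]
    congr 1
    rw [Real.sqrt_eq_rpow, Complex.ofReal_cpow (by norm_num)]; norm_num
  have hs2 : ((√2 : ℝ) : ℂ) ≠ 0 := by
    exact_mod_cast (Real.sqrt_pos.mpr (by norm_num : (0:ℝ) < 2)).ne'
  have hpiC : (π : ℂ) ≠ 0 := by exact_mod_cast Real.pi_ne_zero
  rw [e1, integral_integral_swap i1, setIntegral_congr_fun measurableSet_Ioo e2, integral_integral_swap i2, JJ,
    ← MeasureTheory.integral_const_mul, ← MeasureTheory.integral_const_mul]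
  refine setIntegral_congr_fun measurableSet_Ioo fun s hs => ?_
  have hc := circ2 σ hσ n z hz s hs.1
  have e3 : ∀ β : ℝ, ((1 / √2 : ℝ) : ℂ) * (g1 σ μ β * g2 σ s * (1 + z - (s * (1 + Real.cos β) : ℝ))⁻¹) =
      ((1 / √2 : ℝ) : ℂ) * g2 σ s * (Complex.cos ((σ + n + 1/2) * β) * ((1 + Real.cos β : ℝ) : ℂ) ^ (σ + 1/2) / (1 + z - (s * (1 + Real.cos β) : ℝ))) := by
    intro β
    rw [g1]; ring
  simp only [e3]
  rw [MeasureTheory.integral_const_mul, hc, ← hμ, h2, KK, g2]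
  have hsC : (s:ℂ) ≠ 0 := by exact_mod_cast hs.1.ne'
  rw [Complex.cpow_add _ _ hsC, Complex.cpow_natCast]
  push_cast
  field_simp


lemma F_tendsto (σ : ℂ) (hσ : -1 < σ.re) (n : ℕ) (x : ℝ) (hx : x ∈ Set.Ioo (-1:ℝ) 1) (e : ℝ) (he : e = 1 ∨ e = -1) :
    Tendsto (fun δ : ℝ => ∫ ξ in Set.Ioo (-1:ℝ) 1, ((1 + ξ : ℝ) : ℂ) ^ σ * legendreP (σ + n) ξ / ((x:ℂ) + e * δ * Complex.I - ξ)) (𝓝[>] 0)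
      (𝓝 (2 * ((1 + x : ℝ) : ℂ) ^ σ * (MM (σ + n + 1/2) x + -e * Complex.I * AA (-e * (σ + n + 1/2)) x))) := by
  have hX : 0 < 1 + x := by linarith [hx.1]
  have hXC : ((1 + x : ℝ) : ℂ) ≠ 0 := by exact_mod_cast hX.ne'
  have hre : -1 < (σ + n).re := by
    simp only [Complex.add_re, Complex.natCast_re]
    have : (0:ℝ) ≤ n := Nat.cast_nonneg n
    linarith
  have h1 := JJ_tendsto (σ + n) hre x hx e he
  have h2 : Tendsto (fun δ : ℝ => 2 * (2:ℂ) ^ (σ + n) * ((1 + ((x:ℂ) + e * δ * Complex.I)) ^ (n+1))⁻¹) (𝓝[>] 0)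
      (𝓝 (2 * (2:ℂ) ^ (σ + n) * (((1 + x : ℝ) : ℂ) ^ (n+1))⁻¹)) := by
    have hc : ContinuousAt (fun δ : ℝ => 2 * (2:ℂ) ^ (σ + n) * ((1 + ((x:ℂ) + e * δ * Complex.I)) ^ (n+1))⁻¹) 0 := by
      refine ContinuousAt.mul (by fun_prop) (ContinuousAt.inv₀ (by fun_prop) ?_)
      refine pow_ne_zero _ ?_
      simpa using hXC
    have := hc.tendsto.mono_left (nhdsWithin_le_nhds (s := Set.Ioi (0:ℝ)))
    simpa using this
  have h3 := h2.mul h1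
  have hev : (fun δ : ℝ => 2 * (2:ℂ) ^ (σ + n) * ((1 + ((x:ℂ) + e * δ * Complex.I)) ^ (n+1))⁻¹ * JJ (σ + n) ((x:ℂ) + e * δ * Complex.I)) =ᶠ[𝓝[>] 0]
      fun δ : ℝ => ∫ ξ in Set.Ioo (-1:ℝ) 1, ((1 + ξ : ℝ) : ℂ) ^ σ * legendreP (σ + n) ξ / ((x:ℂ) + e * δ * Complex.I - ξ) := by
    filter_upwards [self_mem_nhdsWithin] with δ hδ
    have hδ : 0 < δ := hδ
    refine (F_eq σ hσ n _ ?_).symm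
    rcases he with h | h <;> simp [h, hδ.ne']
  refine (h3.congr' hev).trans (le_of_eq ?_)
  congr 1
  have h2p : (2:ℂ) ^ (σ + n) ≠ 0 := by
    rw [Ne, Complex.cpow_eq_zero_iff]; simp
  have h4 : ((1 + x : ℝ) : ℂ) ^ (σ + n + 1) = ((1 + x : ℝ) : ℂ) ^ σ * ((1 + x : ℝ) : ℂ) ^ (n + 1) := by
    rw [add_assoc, Complex.cpow_add _ _ hXC, show (n:ℂ) + 1 = ((n + 1 : ℕ) : ℂ) by push_cast; rfl, Complex.cpow_natCast]
  rw [h4, Complex.cpow_neg]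
  field_simp

lemma f_lip (σ ν : ℂ) (x : ℝ) (hx : x ∈ Set.Ioo (-1:ℝ) 1) :
    ∃ C r : ℝ, 0 < r ∧ ∀ ξ : ℝ, |ξ - x| < r →
      ‖((1 + ξ : ℝ) : ℂ) ^ σ * legendreP ν ξ - ((1 + x : ℝ) : ℂ) ^ σ * legendreP ν x‖ ≤ C * |ξ - x| := by
  obtain ⟨C1, r1, hr1, h1⟩ := legendreP_lipschitz ν x hx
  have hX : 0 < 1 + x := by linarith [hx.1]
  have hd : DifferentiableAt ℝ (fun ξ : ℝ => ((1 + ξ : ℝ) : ℂ) ^ σ) x := by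
    have hz : DifferentiableAt ℂ (fun z : ℂ => (1 + z) ^ σ) (x:ℂ) := by
      refine DifferentiableAt.cpow (by fun_prop) (by fun_prop) ?_
      left; simpa using hX
    have h := hz.hasDerivAt.comp_ofReal.differentiableAt
    simpa using h
  obtain ⟨C2, hC2⟩ := hd.isBigO_sub.bound
  rw [Metric.eventually_nhds_iff] at hC2
  obtain ⟨r2, hr2, h2⟩ := hC2
  obtain ⟨r3, hr3, h3⟩ := Metric.eventually_nhds_iff.mp (hd.continuousAt.norm.eventually_lt_const (lt_add_one ‖((1 + x : ℝ) : ℂ) ^ σ‖))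
  refine ⟨(‖((1 + x : ℝ) : ℂ) ^ σ‖ + 1) * C1 + C2 * ‖legendreP ν x‖, min r1 (min r2 r3), by positivity, ?_⟩
  intro ξ hξ
  have a1 := h1 ξ (hξ.trans_le (min_le_left _ _))
  have a2 := h2 (y := ξ) (by rw [Real.dist_eq]; exact hξ.trans_le ((min_le_right _ _).trans (min_le_left _ _)))
  have a3 := h3 (y := ξ) (by rw [Real.dist_eq]; exact hξ.trans_le ((min_le_right _ _).trans (min_le_right _ _)))
  rw [Real.norm_eq_abs] at a2
  have e : ((1 + ξ : ℝ) : ℂ) ^ σ * legendreP ν ξ - ((1 + x : ℝ) : ℂ) ^ σ * legendreP ν x =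
      ((1 + ξ : ℝ) : ℂ) ^ σ * (legendreP ν ξ - legendreP ν x) + (((1 + ξ : ℝ) : ℂ) ^ σ - ((1 + x : ℝ) : ℂ) ^ σ) * legendreP ν x := by ring
  rw [e]
  refine (norm_add_le _ _).trans ?_
  rw [norm_mul, norm_mul]
  calc _ ≤ (‖((1 + x : ℝ) : ℂ) ^ σ‖ + 1) * (C1 * |ξ - x|) + C2 * |ξ - x| * ‖legendreP ν x‖ := by gcongr
    _ = _ := by ring

/-- Generalized Neumann integral. -/
theorem stmt_19 (n : ℕ) (ν : ℂ) (hν : ∀ m : ℤ, ν ≠ (m : ℂ)) (hre : -1 < (ν - n).re)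
    (x : ℝ) (hx : x ∈ Set.Ioo (-1:ℝ) 1) :
    Tendsto (fun ε : ℝ =>
        ∫ ξ in {ξ : ℝ | ξ ∈ Set.Ioo (-1:ℝ) 1 ∧ ε < |ξ - x|},
          ((1 + ξ : ℝ) : ℂ) ^ (ν - n) * legendreP ν ξ / (2 * ((x - ξ : ℝ) : ℂ)))
      (𝓝[>] 0)
      (𝓝 (((1 + x : ℝ) : ℂ) ^ (ν - n) * legendreQ ν x)) := by
  have hνe : ν - n + n = ν := by ring
  have h_int := f_int (ν - n) hre n
  rw [hνe] at h_int
  obtain ⟨C, r, hr, hL⟩ := f_lip (ν - n) ν x hx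
  have t1 := F_tendsto (ν - n) hre n x hx 1 (Or.inl rfl)
  have t2 := F_tendsto (ν - n) hre n x hx (-1) (Or.inr rfl)
  rw [hνe] at t1 t2
  have hre2 : -1 < ν.re := by
    simp only [Complex.sub_re, Complex.natCast_re] at hre
    have : (0:ℝ) ≤ n := Nat.cast_nonneg n
    linarith
  have hQ := legendreQ_eq ν hν hre2 x hx
  refine pv_of_reg (fun ξ : ℝ => ((1 + ξ : ℝ) : ℂ) ^ (ν - n) * legendreP ν ξ) h_int x hx C r hr hL _ ?_
  have t := t1.add t2
  refine (t.congr ?_).trans (le_of_eq ?_)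
  rotate_left
  · congr 1
    rw [show 4 * (((1 + x : ℝ) : ℂ) ^ (ν - n) * legendreQ ν x) = ((1 + x : ℝ) : ℂ) ^ (ν - n) * (4 * legendreQ ν x) by ring, hQ]
    push_cast
    simp only [neg_neg, one_mul, neg_mul]
    ring
  · intro δ
    simp [sub_eq_add_neg]
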